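/- arXiv:1401.0976 — 8 statements merged into one kernel-verified Lean document; each statement's English description precedes it below -/
import Mathlib

section
/- Fischer's identity: Let F be a field of characteristic zero or of characteristic greater than a (with a ≥ 1), so that 2^{a-1}·a! is invertible in F. Then in the polynomial ring F[y_1,…,y_a] one has y_1·y_2⋯y_a = (2^{a-1}·a!)^{-1} · Σ_{r_2,…,r_a ∈ {+1,-1}} (-1)^{#{i : r_i = -1}} · (y_1 + Σ_{i=2}^{a} r_i·y_i)^a, where the sum ranges over all 2^{a-1} choices of signs r_2,…,r_a. -/
lemma fischer_coeff (F : Type*) [Field F] (n : ℕ) (k : Fin (n+1) → ℕ) (hk : ∑ i, k i = n + 1) :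
    ∑ S ∈ (Finset.univ.filter (fun i : Fin (n+1) => i.val ≠ 0)).powerset,
      ((-1 : F) ^ S.card * ∏ i, (if i ∈ S then (-1 : F) else 1) ^ k i) =
      if k = 1 then 2 ^ n else 0 := by
  have h1 : ∀ S : Finset (Fin (n+1)),
      ((-1 : F) ^ S.card * ∏ i, (if i ∈ S then (-1 : F) else 1) ^ k i)
        = ∏ i ∈ S, (-(-1 : F) ^ k i) := by
    intro S
    rw [Finset.prod_neg]
    congr 1
    rw [← Finset.prod_subset (Finset.subset_univ S)]
    · exact Finset.prod_congr rfl (fun i hi => by rw [if_pos hi])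
    · intro i _ hi
      rw [if_neg hi, one_pow]
  simp_rw [h1]
  rw [← Finset.prod_one_add, Finset.prod_filter, Fin.prod_univ_succ]
  simp only [Fin.val_zero, ne_eq, not_true_eq_false, if_false, one_mul, Fin.val_succ,
    Nat.succ_ne_zero, not_false_eq_true, if_true]
  split_ifs with h
  · subst h
    norm_num
  · by_contra hne
    apply h
    have hodd : ∀ i : Fin n, Odd (k i.succ) := by
      intro i
      by_contra hi
      rw [Nat.not_odd_iff_even] at hi
      exact hne (Finset.prod_eq_zero (Finset.mem_univ i) (by rw [hi.neg_one_pow]; ring))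
    choose m hm using hodd
    rw [Fin.sum_univ_succ] at hk
    simp only [hm, Finset.sum_add_distrib, ← Finset.mul_sum, Finset.sum_const,
      Finset.card_univ, Fintype.card_fin, smul_eq_mul, mul_one] at hk
    have hM : ∑ i, m i = 0 := by omega
    have h0 : k 0 = 1 := by omega
    rw [Finset.sum_eq_zero_iff] at hM
    funext i
    refine Fin.cases h0 (fun j => ?_) i
    rw [hm, hM j (Finset.mem_univ j)]; rfl

/-- Fischer's identity: over a field `F` in which `2^(a-1) * a!` is invertible
(e.g. characteristic zero or characteristic greater than `a`), the monomial
`y₁ ⋯ y_a` equals `(2^(a-1) a!)⁻¹` times the signed sum, over all choices of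
signs `r₂, …, r_a ∈ {±1}`, of `(-1)^{#{i : rᵢ = -1}} (y₁ + Σᵢ rᵢ yᵢ)^a`.
Sign choices are encoded by the subset `S ⊆ {i ≠ 1}` of indices with `rᵢ = -1`. -/
theorem fischer_identity (F : Type*) [Field F] (a : ℕ) (ha : 1 ≤ a)
    (hchar : ((2 : F) ^ (a - 1) * (a.factorial : F)) ≠ 0) :
    (∏ i : Fin a, MvPolynomial.X (R := F) i) =
      ((2 : F) ^ (a - 1) * (a.factorial : F))⁻¹ •
        ∑ S ∈ (Finset.univ.filter (fun i : Fin a => i.val ≠ 0)).powerset,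
          ((-1 : F) ^ S.card •
            (∑ i : Fin a, (if i ∈ S then (-1 : F) else 1) • MvPolynomial.X i) ^ a) := by
  obtain ⟨n, rfl⟩ : ∃ n, a = n + 1 := ⟨a - 1, by omega⟩
  rw [eq_inv_smul_iff₀ hchar]
  symm
  simp only [Finset.sum_pow_eq_sum_piAntidiag, MvPolynomial.smul_eq_C_mul, mul_pow,
    Finset.prod_mul_distrib, Finset.mul_sum]
  rw [Finset.sum_comm]
  have key : ∀ k ∈ Finset.piAntidiag (Finset.univ : Finset (Fin (n+1))) (n+1),
      ∑ S ∈ (Finset.univ.filter (fun i : Fin (n+1) => i.val ≠ 0)).powerset,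
        MvPolynomial.C ((-1 : F) ^ S.card) * ((Nat.multinomial Finset.univ k : MvPolynomial (Fin (n+1)) F) *
          ((∏ i, MvPolynomial.C (if i ∈ S then (-1 : F) else 1) ^ k i) *
            ∏ i, MvPolynomial.X i ^ k i)) =
      if k = 1 then MvPolynomial.C ((2 : F) ^ n) * ((Nat.multinomial Finset.univ k : MvPolynomial (Fin (n+1)) F) *
        ∏ i, MvPolynomial.X i ^ k i) else 0 := by
    intro k hk
    have h := fischer_coeff F n k (Finset.mem_piAntidiag.1 hk).1
    have h2 := congrArg (fun c => MvPolynomial.C (σ := Fin (n+1)) c *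
      ((Nat.multinomial Finset.univ k : MvPolynomial (Fin (n+1)) F) *
        ∏ i, MvPolynomial.X i ^ k i)) h
    simp only [map_sum, Finset.sum_mul] at h2
    refine Eq.trans (Finset.sum_congr rfl fun S _ => ?_) (h2.trans ?_)
    · rw [map_mul, map_prod]
      simp only [map_pow]
      ring
    · split_ifs <;> simp
  rw [Finset.sum_congr rfl key, Finset.sum_ite_eq' , if_pos]
  · have : Nat.multinomial Finset.univ (1 : Fin (n+1) → ℕ) = (n+1).factorial := by
      simp [Nat.multinomial]
    rw [this]
    simp [mul_assoc]
  · rw [Finset.mem_piAntidiag]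
    simp
end

section
/- Saxena's duality identity: Let F be a field of characteristic zero and let a, m ≥ 1 be integers. Then there exist univariate polynomials f_{i,j} ∈ F[y], for 1 ≤ i ≤ ma+1 and 1 ≤ j ≤ m, each of degree at most a, such that in F[y_1,…,y_m] one has (y_1 + y_2 + ⋯ + y_m)^a = Σ_{i=1}^{ma+1} Π_{j=1}^{m} f_{i,j}(y_j), where f_{i,j}(y_j) denotes the substitution of the variable y_j into the univariate polynomial f_{i,j}. -/
open Polynomial in
/-- truncated exponential -/
noncomputable def truncE {F R : Type*} [Field F] [CommRing R] [Algebra F R] (a : ℕ) (y : R) : R[X] :=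
  ∑ k ∈ Finset.range (a + 1), Polynomial.monomial k (algebraMap F R ((k.factorial : F)⁻¹) * y ^ k)

lemma truncE_coeff {F R : Type*} [Field F] [CommRing R] [Algebra F R] (a : ℕ) (y : R) (n : ℕ)
    (hn : n ≤ a) :
    (truncE (F := F) a y).coeff n = algebraMap F R ((n.factorial : F)⁻¹) * y ^ n := by
  unfold truncE
  rw [Polynomial.finsetSum_coeff]
  simp only [Polynomial.coeff_monomial]
  rw [Finset.sum_ite_eq']
  simp [Nat.lt_succ_of_le hn]

lemma truncE_natDegree {F R : Type*} [Field F] [CommRing R] [Algebra F R] (a : ℕ) (y : R) :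
    (truncE (F := F) a y).natDegree ≤ a := by
  unfold truncE
  refine Polynomial.natDegree_sum_le_of_forall_le _ _ fun k hk => ?_
  exact (Polynomial.natDegree_monomial_le _).trans (by simpa [Nat.lt_succ_iff] using hk)

lemma truncE_prod_coeff {F R ι : Type*} [Field F] [CharZero F] [CommRing R] [Algebra F R] (a : ℕ)
    (y : ι → R) (s : Finset ι) (n : ℕ) (hn : n ≤ a) :
    (∏ j ∈ s, truncE (F := F) a (y j)).coeff n
      = algebraMap F R ((n.factorial : F)⁻¹) * (∑ j ∈ s, y j) ^ n := by
  classical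
  induction s using Finset.induction_on generalizing n with
  | empty =>
    rcases n with _ | n
    · simp
    · simp [Polynomial.coeff_one]
  | insert i s hi ih =>
    rw [Finset.prod_insert hi, Finset.sum_insert hi, Polynomial.coeff_mul,
      (Commute.all _ _).add_pow', Finset.mul_sum]
    refine Finset.sum_congr rfl fun p hp => ?_
    have hp' := Finset.HasAntidiagonal.mem_antidiagonal.mp hp
    rw [truncE_coeff _ _ _ (by omega), ih _ (by omega), nsmul_eq_mul]
    have key : ((n.factorial : F)⁻¹) * (n.choose p.1 : F)
        = ((p.1.factorial : F)⁻¹) * ((p.2.factorial : F)⁻¹) := by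
      subst hp'
      have h := Nat.add_choose_mul_factorial_mul_factorial p.1 p.2
      rw [← Nat.choose_symm_add] at h
      have h' : ((p.1 + p.2).choose p.1 : F) * p.1.factorial * p.2.factorial
        = (p.1 + p.2).factorial := by exact_mod_cast h
      have h1 : (p.1.factorial : F) ≠ 0 := by exact_mod_cast p.1.factorial_ne_zero
      have h2 : (p.2.factorial : F) ≠ 0 := by exact_mod_cast p.2.factorial_ne_zero
      have h3 : ((p.1 + p.2).factorial : F) ≠ 0 := by exact_mod_cast (p.1 + p.2).factorial_ne_zero
      field_simp
      linear_combination h'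
    have key' := congrArg (algebraMap F R) key
    simp only [map_mul, map_natCast] at key'
    linear_combination (-(y i ^ p.1 * (∑ j ∈ s, y j) ^ p.2)) * key'

lemma exists_weights (F : Type*) [Field F] [CharZero F] (N a : ℕ) (ha : a ≤ N) :
    ∃ w : Fin (N + 1) → F, ∀ k : Fin (N + 1),
      ∑ i, w i * ((i : ℕ) : F) ^ (k : ℕ) = if (k : ℕ) = a then 1 else 0 := by
  let v : Fin (N + 1) → F := fun i => ((i : ℕ) : F)
  have hv : Function.Injective v := fun i j h => Fin.ext (Nat.cast_injective h)
  have hdet : IsUnit (Matrix.vandermonde v).det :=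
    isUnit_iff_ne_zero.mpr (Matrix.det_vandermonde_ne_zero_iff.mpr hv)
  refine ⟨fun i => (Matrix.vandermonde v)⁻¹ ⟨a, by omega⟩ i, fun k => ?_⟩
  have h := congrFun (congrFun (Matrix.nonsing_inv_mul _ hdet) ⟨a, by omega⟩) k
  rw [Matrix.mul_apply, Matrix.one_apply] at h
  simp only [Matrix.vandermonde_apply, v, Fin.ext_iff] at h
  rw [h]
  simp [eq_comm]

/-- Saxena's duality identity: over a field of characteristic zero, for `a, m ≥ 1`,
there exist univariate polynomials `f i j` of degree at most `a` such that
`(y₁ + ⋯ + y_m)^a = Σ_{i=1}^{ma+1} Π_{j=1}^{m} f i j (y_j)`. -/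
theorem saxena_duality (F : Type*) [Field F] [CharZero F] (a m : ℕ)
    (ha : 1 ≤ a) (hm : 1 ≤ m) :
    ∃ f : Fin (m * a + 1) → Fin m → Polynomial F,
      (∀ i j, (f i j).natDegree ≤ a) ∧
      (∑ j : Fin m, MvPolynomial.X (R := F) j) ^ a =
        ∑ i : Fin (m * a + 1), ∏ j : Fin m,
          Polynomial.aeval (MvPolynomial.X j) (f i j) := by
  classical
  obtain ⟨w, hw⟩ := exists_weights F (m * a) a (Nat.le_mul_of_pos_left a hm)
  let j0 : Fin m := ⟨0, hm⟩
  let g : Fin (m * a + 1) → Polynomial F := fun i =>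
    ∑ k ∈ Finset.range (a + 1), Polynomial.monomial k ((k.factorial : F)⁻¹ * ((i : ℕ) : F) ^ k)
  have hg : ∀ i, (g i).natDegree ≤ a := fun i => by
    refine Polynomial.natDegree_sum_le_of_forall_le _ _ fun k hk => ?_
    exact (Polynomial.natDegree_monomial_le _).trans (by simpa [Nat.lt_succ_iff] using hk)
  refine ⟨fun i j => Polynomial.C (if j = j0 then (a.factorial : F) * w i else 1) * g i,
    fun i j => (Polynomial.natDegree_C_mul_le _ _).trans (hg i), ?_⟩
  let P : Polynomial (MvPolynomial (Fin m) F) :=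
    ∏ j : Fin m, truncE (F := F) a (MvPolynomial.X j)
  have hP : P.natDegree < m * a + 1 := by
    refine Nat.lt_succ_of_le ((Polynomial.natDegree_prod_le _ _).trans ?_)
    refine (Finset.sum_le_sum fun j _ => truncE_natDegree a _).trans ?_
    simp
  have hev : ∀ i : Fin (m * a + 1), ∏ j : Fin m, Polynomial.aeval (MvPolynomial.X (R := F) j) (g i)
      = P.eval (algebraMap F _ ((i : ℕ) : F)) := fun i => by
    rw [Polynomial.eval_prod]
    refine Finset.prod_congr rfl fun j _ => ?_
    simp only [g, truncE, map_sum, Polynomial.eval_finsetSum, Polynomial.aeval_monomial,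
      Polynomial.eval_monomial, map_mul, map_pow]
    exact Finset.sum_congr rfl fun k _ => by ring
  have hc := truncE_prod_coeff (F := F) a (fun j : Fin m => MvPolynomial.X (R := F) j)
    Finset.univ a le_rfl
  have hfac : (a.factorial : F) ≠ 0 := by exact_mod_cast a.factorial_ne_zero
  have hsum : ∑ i, algebraMap F (MvPolynomial (Fin m) F) (w i)
      * P.eval (algebraMap F _ ((i : ℕ) : F)) = P.coeff a := by
    simp only [Polynomial.eval_eq_sum_range' hP, Finset.mul_sum]
    rw [Finset.sum_comm]
    rw [Finset.sum_eq_single a]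
    · have h := hw ⟨a, Nat.lt_succ_of_le (Nat.le_mul_of_pos_left a hm)⟩
      have h' := congrArg (algebraMap F (MvPolynomial (Fin m) F)) h
      simp only [map_sum, map_mul, map_pow, if_true, map_one] at h'
      refine Eq.trans ?_ (mul_one (P.coeff a))
      refine Eq.trans ?_ (congrArg (P.coeff a * ·) h')
      simp only [Finset.mul_sum]
      exact Finset.sum_congr rfl fun k _ => by ring
    · intro k hk hka
      have h := hw ⟨k, Finset.mem_range.mp hk⟩
      have h' := congrArg (algebraMap F (MvPolynomial (Fin m) F)) h
      simp only [map_sum, map_mul, map_pow, if_neg hka, map_zero] at h'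
      rw [← mul_zero (P.coeff k), ← h', Finset.mul_sum]
      exact Finset.sum_congr rfl fun k _ => by ring
    · intro h
      exact absurd (Finset.mem_range.mpr (Nat.lt_succ_of_le (Nat.le_mul_of_pos_left a hm))) h
  have hterm : ∀ i : Fin (m * a + 1), ∏ j : Fin m, Polynomial.aeval (MvPolynomial.X (R := F) j)
      (Polynomial.C (if j = j0 then (a.factorial : F) * w i else 1) * g i)
      = algebraMap F _ (a.factorial : F) * (algebraMap F _ (w i)
        * P.eval (algebraMap F _ ((i : ℕ) : F))) := fun i => by
    simp only [map_mul, Polynomial.aeval_C, Finset.prod_mul_distrib]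
    rw [hev, ← map_prod, Finset.prod_ite_eq' Finset.univ j0, if_pos (Finset.mem_univ _), map_mul,
      mul_assoc]
  rw [Finset.sum_congr rfl fun i _ => hterm i, ← Finset.mul_sum, hsum]
  rw [show P.coeff a = _ from hc, ← mul_assoc, ← map_mul, mul_inv_cancel₀ hfac, map_one, one_mul]
end

section
/- Vandermonde map preserves k-rank: Let F be a field with |F| > n·k². For β ∈ F let Ψ_β : F[x_1,…,x_n] → F[y_1,…,y_k] be the F-algebra homomorphism determined by Ψ_β(x_i) = Σ_{j=1}^{k} β^{i·j}·y_j for each i ∈ {1,…,n}. Let S be a finite set of linear forms (homogeneous polynomials of degree 1) in F[x_1,…,x_n] whose F-linear span has dimension at most k. Then there exists β ∈ F such that the dimension of the F-linear span of Ψ_β(S) = {Ψ_β(ℓ) : ℓ ∈ S} equals the dimension of the F-linear span of S. -/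
open Polynomial in
theorem aux_echelon {F : Type*} [Field F] (m : ℕ) : ∀ (W : Submodule F F[X]), W ≤ degreeLT F m →
    ∃ (r : ℕ) (p : Fin r → F[X]), Module.finrank F W ≤ r ∧ StrictMono (fun a => (p a).natDegree) ∧
      ∀ a, p a ∈ W ∧ p a ≠ 0 := by
  induction m with
  | zero =>
    intro W hW
    refine ⟨0, Fin.elim0, ?_, fun a => a.elim0, fun a => a.elim0⟩
    have : W = ⊥ := by
      rw [eq_bot_iff]
      intro x hx
      have := mem_degreeLT.1 (hW hx)
      simpa using this
    subst this
    simp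
  | succ m ih =>
    intro W hW
    obtain ⟨r, p, hr, hp, hpW⟩ := ih (W ⊓ degreeLT F m) inf_le_right
    by_cases hle : W ≤ degreeLT F m
    · rw [inf_eq_left.2 hle] at hr
      exact ⟨r, p, hr, hp, fun a => ⟨(hpW a).1.1, (hpW a).2⟩⟩
    obtain ⟨q, hqW, hq⟩ := SetLike.not_le_iff_exists.1 hle
    have hq1 := mem_degreeLT.1 (hW hqW)
    rw [mem_degreeLT, not_lt] at hq
    have hq0 : q ≠ 0 := by
      rintro rfl
      simp at hq
    have hqd : q.natDegree = m := by
      rw [degree_eq_natDegree hq0] at hq hq1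
      norm_cast at hq hq1
      omega
    refine ⟨r + 1, Fin.snoc p q, ?_, ?_, ?_⟩
    · have : FiniteDimensional F (degreeLT F (m+1)) :=
        Module.Finite.equiv (degreeLTEquiv F (m+1)).symm
      have : FiniteDimensional F W := Submodule.finiteDimensional_of_le hW
      have hsup : W ≤ (W ⊓ degreeLT F m) ⊔ Submodule.span F {q} := by
        intro x hx
        have hqm : q.coeff m ≠ 0 := by
          rw [← hqd]; simpa using hq0
        have : x = (x - (x.coeff m / q.coeff m) • q) + (x.coeff m / q.coeff m) • q := by simp
        rw [this]
        refine Submodule.add_mem_sup ⟨W.sub_mem hx (W.smul_mem _ hqW), ?_⟩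
          (Submodule.smul_mem _ _ (Submodule.mem_span_singleton_self q))
        have h1 := (degreeLT F (m+1)).sub_mem (hW hx) ((degreeLT F (m+1)).smul_mem (x.coeff m / q.coeff m) (hW hqW))
        simp only [SetLike.mem_coe]
        rw [mem_degreeLT, degree_lt_iff_coeff_zero] at h1 ⊢
        intro i hi
        rcases eq_or_lt_of_le hi with rfl | hi
        · simp [hqm]
        · exact h1 i hi
      have : FiniteDimensional F (W ⊓ degreeLT F m : Submodule F F[X]) :=
        Submodule.finiteDimensional_of_le inf_le_left
      have h1 := Submodule.finrank_mono hsup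
      have h2 := Submodule.finrank_add_le_finrank_add_finrank (W ⊓ degreeLT F m) (Submodule.span F {q})
      have h3 := finrank_span_singleton (K := F) hq0
      omega
    · have hlt : ∀ a, (p a).natDegree < m := by
        intro a
        have := mem_degreeLT.1 (hpW a).1.2
        rw [degree_eq_natDegree (hpW a).2] at this
        exact_mod_cast this
      intro a b hab
      induction b using Fin.lastCases with
      | last =>
        induction a using Fin.lastCases with
        | last => exact absurd hab (lt_irrefl _)
        | cast a => simpa [hqd] using hlt a
      | cast b =>
        induction a using Fin.lastCases with
        | last => exact absurd hab (not_lt.2 (Fin.le_last _))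
        | cast a => simpa using hp (Fin.castSucc_lt_castSucc_iff.1 hab)
    · intro a
      induction a using Fin.lastCases with
      | last => simpa using ⟨hqW, hq0⟩
      | cast a => simpa using ⟨(hpW a).1.1, (hpW a).2⟩

open Polynomial in
theorem aux_det {F : Type*} [Field F] {r n : ℕ} (p : Fin r → F[X])
    (hp : StrictMono (fun a => (p a).natDegree)) (h0 : ∀ a, p a ≠ 0)
    (hn : ∀ a, (p a).natDegree ≤ n) :
    (Matrix.of fun a j : Fin r => expand F (j.1 + 1) (p a)).det ≠ 0 ∧
    (Matrix.of fun a j : Fin r => expand F (j.1 + 1) (p a)).det.natDegree ≤ n * r ^ 2 := by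
  have hdeg : ∀ σ : Equiv.Perm (Fin r),
      (∏ a, expand F ((σ a).1 + 1) (p a)).natDegree = ∑ a, (p a).natDegree * ((σ a).1 + 1) := by
    intro σ
    rw [natDegree_prod]
    · simp [natDegree_expand]
    · intro a _
      exact (expand_ne_zero (Nat.succ_pos _)).2 (h0 a)
  rw [← Matrix.det_transpose, Matrix.det_apply]
  simp only [Matrix.transpose_apply, Matrix.of_apply]
  constructor
  · intro h
    have h2 := congrArg (fun f => coeff f (∑ a : Fin r, (p a).natDegree * (a.1 + 1))) h
    simp only [finsetSum_coeff, coeff_zero] at h2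
    rw [Finset.sum_eq_single 1] at h2
    · have h3 := hdeg 1
      simp only [Equiv.Perm.coe_one, id] at h3
      simp only [Equiv.Perm.sign_one, one_smul, Equiv.Perm.coe_one, id] at h2
      rw [← h3, coeff_natDegree, leadingCoeff_eq_zero, Finset.prod_eq_zero_iff] at h2
      obtain ⟨a, _, ha⟩ := h2
      exact (expand_ne_zero (Nat.succ_pos _)).2 (h0 a) ha
    · intro σ _ hσ
      rw [Units.smul_def, coeff_smul, coeff_eq_zero_of_natDegree_lt, smul_zero]
      rw [hdeg]
      have hm : Monovary (fun a => (p a).natDegree) (fun a : Fin r => a.1 + 1) := by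
        intro a b hab
        apply hp.monotone
        simp at hab
        exact hab.le
      have := (hm.sum_mul_comp_perm_lt_sum_mul_iff (σ := σ)).2 ?_
      · simpa using this
      · intro hmv
        apply hσ
        have hmono : Monotone σ := by
          intro a b hab
          by_contra hlt
          rw [not_le] at hlt
          have h5 := hmv (i := b) (j := a) (by simpa using hlt)
          have h6 := hp.le_iff_le.1 h5
          have : a = b := le_antisymm hab h6
          subst this
          exact lt_irrefl _ hlt
        have hs : StrictMono σ := hmono.strictMono_of_injective σ.injective
        ext a
        have : (hs.orderIsoOfSurjective σ σ.surjective) = OrderIso.refl _ := Subsingleton.elim _ _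
        have h7 := congrArg (fun e => (e a).1) this
        simpa using h7
    · simp
  · apply natDegree_sum_le_of_forall_le
    intro σ _
    rw [Units.smul_def]
    refine (natDegree_smul_le _ _).trans ?_
    rw [hdeg]
    calc _ ≤ ∑ a : Fin r, n * r := Finset.sum_le_sum fun a _ => Nat.mul_le_mul (hn a) (σ a).2
      _ = n * r ^ 2 := by simp; ring

theorem aux_decomp {F : Type*} [Field F] {n : ℕ} (p : MvPolynomial (Fin n) F)
    (hp : p.IsHomogeneous 1) :
    p = ∑ i, (p.coeff (Finsupp.single i 1)) • MvPolynomial.X i := by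
  ext m
  rw [MvPolynomial.coeff_sum]
  simp only [MvPolynomial.coeff_smul, MvPolynomial.coeff_X, smul_eq_mul, mul_ite, mul_one, mul_zero]
  by_cases hm : m.degree = 1
  · obtain ⟨i, rfl⟩ := (Finsupp.sum_eq_one_iff m).1 hm
    simp [Finsupp.single_left_inj]
  · rw [hp.coeff_eq_zero hm, Finset.sum_eq_zero]
    intro i _
    rw [if_neg]
    rintro rfl
    simp at hm

open Polynomial in
noncomputable def auxL (F : Type*) [Field F] (n : ℕ) : MvPolynomial (Fin n) F →ₗ[F] F[X] :=
  ∑ i : Fin n, (Polynomial.monomial (i.1 + 1)).comp (MvPolynomial.lcoeff F (Finsupp.single i 1))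

theorem auxL_apply (F : Type*) [Field F] (n : ℕ) (p : MvPolynomial (Fin n) F) :
    auxL F n p = ∑ i : Fin n, Polynomial.monomial (i.1 + 1) (p.coeff (Finsupp.single i 1)) := by
  simp [auxL]

/-- Vandermonde map preserves k-rank: over a field `F` with `|F| > n·k²`, for any
finite set `S` of linear forms in `F[x₁,…,xₙ]` whose span has dimension at most `k`,
there exists `β ∈ F` such that the substitution `xᵢ ↦ Σ_{j=1}^k β^{ij} yⱼ`
preserves the dimension of the linear span of `S`. -/
theorem vandermonde_preserves_rank (F : Type*) [Field F] (n k : ℕ)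
    (hF : ((n * k ^ 2 : ℕ) : Cardinal) < Cardinal.mk F)
    (S : Finset (MvPolynomial (Fin n) F))
    (hhom : ∀ ℓ ∈ S, MvPolynomial.IsHomogeneous ℓ 1)
    (hrk : Module.finrank F (Submodule.span F (S : Set (MvPolynomial (Fin n) F))) ≤ k) :
    ∃ β : F,
      Module.finrank F (Submodule.span F
        ((fun p => MvPolynomial.aeval
            (fun i : Fin n =>
              ∑ j : Fin k, β ^ ((i.1 + 1) * (j.1 + 1)) • MvPolynomial.X (R := F) j) p) '' (S : Set (MvPolynomial (Fin n) F)))) =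
      Module.finrank F (Submodule.span F (S : Set (MvPolynomial (Fin n) F))) := by
  set V := Submodule.span F (S : Set (MvPolynomial (Fin n) F)) with hV
  have : FiniteDimensional F V := FiniteDimensional.span_finset F S
  have hVhom : ∀ p ∈ V, p.IsHomogeneous 1 := by
    have : V ≤ MvPolynomial.homogeneousSubmodule (Fin n) F 1 :=
      Submodule.span_le.2 fun p hp => hhom p hp
    exact fun p hp => this hp
  have hLdeg : ∀ p, auxL F n p ∈ Polynomial.degreeLT F (n + 1) := by
    intro p
    rw [auxL_apply]
    refine Submodule.sum_mem _ fun i _ => ?_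
    rw [Polynomial.mem_degreeLT]
    refine (Polynomial.degree_monomial_le _ _).trans_lt ?_
    have := i.2
    exact_mod_cast Nat.succ_lt_succ this
  have hinj : Function.Injective ((auxL F n).domRestrict V) := by
    rw [← LinearMap.ker_eq_bot, eq_bot_iff]
    rintro ⟨p, hp⟩ h
    simp only [LinearMap.mem_ker, LinearMap.domRestrict_apply] at h
    have hc : ∀ i, p.coeff (Finsupp.single i 1) = 0 := by
      intro i
      have := congrArg (fun f => Polynomial.coeff f (i.1 + 1)) h
      simpa [auxL_apply, Polynomial.coeff_monomial, Fin.val_inj] using this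
    have := aux_decomp p (hVhom p hp)
    simp only [hc, zero_smul, Finset.sum_const_zero] at this
    simp [this]
  have hfr : Module.finrank F (V.map (auxL F n)) = Module.finrank F V := by
    rw [← LinearMap.range_domRestrict]
    exact LinearMap.finrank_range_of_inj hinj
  obtain ⟨r', p', hr', hp', hpW'⟩ := aux_echelon (n + 1) (V.map (auxL F n)) (by
    rintro _ ⟨p, _, rfl⟩; exact hLdeg p)
  rw [hfr] at hr'
  generalize hr : Module.finrank F V = r at *
  let p : Fin r → Polynomial F := fun a => p' (Fin.castLE hr' a)
  have hp : StrictMono fun a => (p a).natDegree := fun a b hab => hp' (by simpa using hab)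
  have hq : ∀ a, ∃ q ∈ V, auxL F n q = p a := fun a => (hpW' (Fin.castLE hr' a)).1
  choose q hqV hqL using hq
  have h0 : ∀ a, p a ≠ 0 := fun a => (hpW' (Fin.castLE hr' a)).2
  have hn : ∀ a, (p a).natDegree ≤ n := by
    intro a
    have := Polynomial.mem_degreeLT.1 (hLdeg (q a))
    rw [hqL, Polynomial.degree_eq_natDegree (h0 a)] at this
    norm_cast at this
    omega
  obtain ⟨hD, hDd⟩ := aux_det p hp h0 hn
  obtain ⟨β, hβ⟩ := Polynomial.exists_eval_ne_zero_of_natDegree_lt_card _ hD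
    (lt_of_le_of_lt (by
      exact_mod_cast hDd.trans (Nat.mul_le_mul_left n (Nat.pow_le_pow_left hrk 2))) hF)
  refine ⟨β, ?_⟩
  set Ψ := (MvPolynomial.aeval (R := F) (fun i : Fin n =>
              ∑ j : Fin k, β ^ ((i.1 + 1) * (j.1 + 1)) • MvPolynomial.X (R := F) j)) with hΨ
  have hmap : Submodule.span F ((fun p => Ψ p) '' (S : Set (MvPolynomial (Fin n) F)))
      = V.map Ψ.toLinearMap := by
    rw [hV, Submodule.map_span]; rfl
  rw [hmap]
  apply le_antisymm
  · rw [← hr]; exact Submodule.finrank_map_le _ _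
  have hcoeff : ∀ a (j : Fin k), (Ψ (q a)).coeff (Finsupp.single j 1)
      = (p a).eval (β ^ (j.1 + 1)) := by
    intro a j
    rw [← hqL, auxL_apply]
    conv_lhs => rw [aux_decomp (q a) (hVhom _ (hqV a))]
    simp only [map_sum, map_smul, hΨ, MvPolynomial.aeval_X, MvPolynomial.coeff_sum,
      MvPolynomial.coeff_smul, MvPolynomial.coeff_X, Polynomial.eval_finsetSum,
      Polynomial.eval_monomial]
    refine Finset.sum_congr rfl fun i _ => ?_
    simp [Finsupp.single_left_inj, ← pow_mul, mul_comm]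
  let G : MvPolynomial (Fin k) F →ₗ[F] (Fin r → F) :=
    LinearMap.pi fun j => MvPolynomial.lcoeff F (Finsupp.single (Fin.castLE hrk j) 1)
  have hli : LinearIndependent F (fun a => Ψ (q a)) := by
    apply LinearIndependent.of_comp G
    have hM : (Matrix.of fun a j : Fin r => (p a).eval (β ^ (j.1 + 1))).det ≠ 0 := by
      convert hβ
      rw [← Polynomial.coe_evalRingHom, RingHom.map_det]
      congr 1
      ext a j
      simp [Polynomial.expand_eval]
    have := Matrix.linearIndependent_rows_of_det_ne_zero hM
    have heq : (G ∘ fun a => Ψ (q a)) =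
        fun i => Matrix.of (fun a j : Fin r => (p a).eval (β ^ (j.1 + 1))) i := by
      ext a j
      simp [G, hcoeff]
    rw [heq]
    exact this
  have hli2 : LinearIndependent F
      (fun a => (⟨Ψ (q a), ⟨q a, hqV a, rfl⟩⟩ : V.map Ψ.toLinearMap)) :=
    LinearIndependent.of_comp (V.map Ψ.toLinearMap).subtype hli
  simpa using hli2.fintype_card_le_finrank
end

section
/- Faithful maps are useful for identity testing: Let F be a field, let φ : F[x_1,…,x_n] → F[y_1,…,y_k] be an F-algebra homomorphism, and let f_1,…,f_m ∈ F[x_1,…,x_n]. Suppose φ is faithful to f = {f_1,…,f_m}, i.e., trdeg_F{f_1,…,f_m} = trdeg_F{φ(f_1),…,φ(f_m)}. Then for every polynomial C ∈ F[z_1,…,z_m]: C(f_1,…,f_m) = 0 in F[x_1,…,x_n] if and only if C(φ(f_1),…,φ(f_m)) = 0 in F[y_1,…,y_k]. -/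
open scoped Classical

/-- The transcendence degree of a finite set `s` of elements of an `F`-algebra:
the largest cardinality of a subset of `s` that is algebraically independent
over `F` (algebraic independence meaning that no nonzero polynomial over `F`
annihilates the elements). -/
noncomputable def fintrdeg (F : Type*) [CommRing F] {A : Type*} [CommRing A]
    [Algebra F A] (s : Finset A) : ℕ :=
  sSup {m | ∃ t : Finset A, t ⊆ s ∧ t.card = m ∧
    AlgebraicIndependent F (fun x : (t : Set A) => (x : A))}

theorem fintrdeg_bdd (F : Type*) [CommRing F] {A : Type*} [CommRing A]
    [Algebra F A] (s : Finset A) : BddAbove {m | ∃ t : Finset A, t ⊆ s ∧ t.card = m ∧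
    AlgebraicIndependent F (fun x : (t : Set A) => (x : A))} := by
  refine ⟨s.card, ?_⟩
  rintro _ ⟨t, ht, rfl, -⟩
  exact Finset.card_le_card ht

theorem fintrdeg_le (F : Type*) [CommRing F] {A : Type*} [CommRing A]
    [Algebra F A] (s t : Finset A) (hts : t ⊆ s)
    (h : AlgebraicIndependent F (fun x : (t : Set A) => (x : A))) :
    t.card ≤ fintrdeg F s :=
  le_csSup (fintrdeg_bdd F s) ⟨t, hts, rfl, h⟩

theorem fintrdeg_attained (F : Type*) [Field F] {A : Type*} [CommRing A] [Nontrivial A]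
    [Algebra F A] (s : Finset A) : ∃ t : Finset A, t ⊆ s ∧ t.card = fintrdeg F s ∧
    AlgebraicIndependent F (fun x : (t : Set A) => (x : A)) := by
  refine Nat.sSup_mem (s := {m | ∃ t : Finset A, t ⊆ s ∧ t.card = m ∧
    AlgebraicIndependent F (fun x : (t : Set A) => (x : A))}) ?_ (fintrdeg_bdd F s)
  refine ⟨0, ∅, by simp, by simp, ?_⟩
  rw [Finset.coe_empty]
  exact algebraicIndependent_empty

/-- Faithful maps are useful for identity testing: if an `F`-algebra homomorphism
`φ : F[x₁,…,xₙ] → F[y₁,…,y_k]` preserves the transcendence degree of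
`{f₁,…,f_m}`, then for every polynomial `C ∈ F[z₁,…,z_m]` we have
`C(f₁,…,f_m) = 0` iff `C(φ(f₁),…,φ(f_m)) = 0`. -/
theorem faithful_useful (F : Type*) [Field F] (n k m : ℕ)
    (φ : MvPolynomial (Fin n) F →ₐ[F] MvPolynomial (Fin k) F)
    (f : Fin m → MvPolynomial (Fin n) F)
    (hfaithful : fintrdeg F (Finset.image f Finset.univ) =
      fintrdeg F (Finset.image (fun i => φ (f i)) Finset.univ)) :
    ∀ C : MvPolynomial (Fin m) F,
      MvPolynomial.aeval f C = 0 ↔ MvPolynomial.aeval (fun i => φ (f i)) C = 0 := by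
  have key : ∀ C : MvPolynomial (Fin m) F,
      MvPolynomial.aeval (fun i => φ (f i)) C = φ (MvPolynomial.aeval f C) := by
    intro C
    have : MvPolynomial.aeval (fun i => φ (f i)) = φ.comp (MvPolynomial.aeval f) := by
      ext i; simp
    rw [this]; rfl
  obtain ⟨t', ht's, ht'c, ht'i⟩ := fintrdeg_attained F (Finset.image (fun i => φ (f i)) Finset.univ)
  have hch : ∀ y ∈ t', ∃ x ∈ Finset.image f Finset.univ, φ x = y := by
    intro y hy
    obtain ⟨i, -, hi⟩ := Finset.mem_image.1 (ht's hy)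
    exact ⟨f i, Finset.mem_image_of_mem _ (Finset.mem_univ _), hi⟩
  choose! g hg hφg using hch
  have hcomp : AlgebraicIndependent F (fun y : (t' : Set (MvPolynomial (Fin k) F)) => g y) := by
    apply AlgebraicIndependent.of_comp φ
    convert ht'i using 1
    funext y
    exact hφg _ y.2
  have hinj : Set.InjOn g t' := by
    intro a ha b hb h
    rw [← hφg a ha, ← hφg b hb, h]
  let t := t'.image g
  have htc : t.card = fintrdeg F (Finset.image f Finset.univ) := by
    rw [hfaithful, ← ht'c]; exact Finset.card_image_of_injOn hinj
  have hr : Set.range (fun y : (t' : Set (MvPolynomial (Fin k) F)) => g y) = (t : Set _) := by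
    ext x; simp [t]
  have hti : AlgebraicIndepOn F id (t : Set (MvPolynomial (Fin n) F)) := by
    exact hcomp.to_subtype_range' hr
  have hts : t ⊆ Finset.image f Finset.univ := by
    intro x hx
    obtain ⟨y, hy, rfl⟩ := Finset.mem_image.1 hx
    exact hg y hy
  have halg : ∀ i, IsAlgebraic (Algebra.adjoin F (t : Set (MvPolynomial (Fin n) F))) (f i) := by
    intro i
    by_cases hi : f i ∈ t
    · exact isAlgebraic_algebraMap
        (⟨f i, Algebra.subset_adjoin hi⟩ : Algebra.adjoin F (t : Set (MvPolynomial (Fin n) F)))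
    · by_contra hT
      have h2 := (AlgebraicIndepOn.insert_iff (R := F) (x := id) (s := (t : Set _)) (i := f i)
        (by simpa using hi)).2 ⟨hti, by rw [Set.image_id]; exact hT⟩
      have h3 := fintrdeg_le F (Finset.image f Finset.univ) (insert (f i) t)
        (Finset.insert_subset (Finset.mem_image_of_mem _ (Finset.mem_univ _)) hts)
        (by rw [Finset.coe_insert]; exact h2)
      rw [Finset.card_insert_of_notMem hi] at h3
      omega
  have hφinj : ∀ b ∈ Algebra.adjoin F (t : Set (MvPolynomial (Fin n) F)), φ b = 0 → b = 0 := by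
    intro b hb hb0
    rw [← hr, Algebra.adjoin_range_eq_range_aeval] at hb
    obtain ⟨p, rfl⟩ := hb
    have : MvPolynomial.aeval (fun y : (t' : Set (MvPolynomial (Fin k) F)) => (y : MvPolynomial (Fin k) F)) p = 0 := by
      have e : MvPolynomial.aeval (fun y : (t' : Set (MvPolynomial (Fin k) F)) => (y : MvPolynomial (Fin k) F))
          = φ.comp (MvPolynomial.aeval (fun y : (t' : Set (MvPolynomial (Fin k) F)) => g y)) := by
        apply MvPolynomial.algHom_ext
        intro y
        simp only [MvPolynomial.aeval_X, AlgHom.comp_apply]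
        exact (hφg _ y.2).symm
      rw [e]; exact hb0
    have hp : p = 0 := ht'i (by rw [this, map_zero])
    rw [hp]; simp
  intro C
  rw [key]
  refine ⟨fun h => by rw [h, map_zero], fun h => ?_⟩
  by_contra hne
  have hA : IsAlgebraic (Algebra.adjoin F (t : Set (MvPolynomial (Fin n) F)))
      (MvPolynomial.aeval f C) := by
    clear h hne
    induction C using MvPolynomial.induction_on with
    | C a =>
      rw [MvPolynomial.aeval_C]
      exact isAlgebraic_algebraMap
        (algebraMap F (Algebra.adjoin F (t : Set (MvPolynomial (Fin n) F))) a)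
    | add p q hp hq => rw [map_add]; exact hp.add hq
    | mul_X p i hp => rw [map_mul, MvPolynomial.aeval_X]; exact hp.mul (halg i)
  obtain ⟨r, hr0, c, hc⟩ := hA.exists_nonzero_dvd (mem_nonZeroDivisors_of_ne_zero hne)
  apply hr0
  apply Subtype.ext
  apply hφinj _ r.2
  have : (r : MvPolynomial (Fin n) F) = MvPolynomial.aeval f C * c := hc
  rw [this, map_mul, h, zero_mul]
end

section
/- Jacobian criterion for algebraic independence: Let F be a field and let f_1,…,f_m ∈ F[x_1,…,x_n] be polynomials each of (total) degree at most d, with trdeg_F{f_1,…,f_m} ≤ r. Assume char(F) = 0 or char(F) > d^r. Then trdeg_F{f_1,…,f_m} equals the rank, over the rational function field F(x_1,…,x_n), of the m×n Jacobian matrix J_x(f) whose (i,j)-entry is the partial derivative ∂f_i/∂x_j. -/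
open scoped Classical

open MvPolynomial

lemma growth_aux (h : ℕ → ℕ) (n c q : ℕ) (hpoly : ∀ N, h N ≤ (N+1)^n) (h0 : 1 ≤ h 0) (hq : 1 ≤ q)
    (hh : ∀ N, (q+1) * h N ≤ q * h (N + c)) : False := by
  have key : ∀ k, (q+1)^k ≤ q^k * h (k*c) := by
    intro k
    induction k with
    | zero => simpa using h0
    | succ k ih =>
      calc (q+1)^(k+1) = (q+1) * (q+1)^k := by ring
        _ ≤ (q+1) * (q^k * h (k*c)) := by gcongr
        _ = q^k * ((q+1) * h (k*c)) := by ring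
        _ ≤ q^k * (q * h (k*c+c)) := Nat.mul_le_mul_left _ (hh _)
        _ = q^(k+1) * h ((k+1)*c) := by rw [show (k+1)*c = k*c+c by ring]; ring
  have hq' : (0:ℝ) < q := by exact_mod_cast hq
  have hr : 1 < ((q+1:ℝ)/q) := by rw [lt_div_iff₀ hq']; linarith
  have lim := tendsto_pow_const_div_const_pow_of_one_lt n hr
  have lim2 : Filter.Tendsto (fun k : ℕ => ((c+1:ℝ)^n) * (2:ℝ)^n * ((k:ℝ)^n / ((q+1:ℝ)/q)^k)) Filter.atTop (nhds 0) := by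
    simpa using lim.const_mul (((c+1:ℝ)^n) * (2:ℝ)^n)
  have ev := (lim2.eventually (gt_mem_nhds (show (0:ℝ) < 1 by norm_num))).and (Filter.eventually_ge_atTop 1)
  obtain ⟨k, hk, hk1⟩ := ev.exists
  have k1 := key k
  have k2 := hpoly (k*c)
  have k3 : (k*c+1) ≤ (c+1) * 2 * k := by nlinarith
  have k4 : (q+1)^k ≤ q^k * ((c+1)*2*k)^n := k1.trans (by gcongr; exact k2.trans (by gcongr))
  have k5 : ((q:ℝ)+1)^k ≤ (q:ℝ)^k * ((c+1)*2*k)^n := by exact_mod_cast k4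
  have e : ((c+1:ℝ)^n) * (2:ℝ)^n * ((k:ℝ)^n / ((q+1:ℝ)/q)^k) = ((q:ℝ)^k * ((c+1)*2*k)^n) / ((q:ℝ)+1)^k := by
    rw [div_pow, mul_pow, mul_pow]; field_simp
  rw [e, div_lt_one (by positivity)] at hk
  linarith

lemma card_degree_le (n N : ℕ) : Nat.card {γ : Fin n →₀ ℕ // γ.degree ≤ N} ≤ (N+1)^n := by
  have : Function.Injective (fun (γ : {γ : Fin n →₀ ℕ // γ.degree ≤ N}) (i : Fin n) =>
      (⟨γ.1 i, Nat.lt_succ_of_le ((Finsupp.le_degree i γ.1).trans γ.2)⟩ : Fin (N+1))) := by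
    intro a b hab
    ext i
    have := congrFun hab i
    simpa using this
  have := Nat.card_le_card_of_injective _ this
  simpa using this

lemma count_le {F : Type*} [Field F] {n : ℕ} (d : ℕ) (hd : 1 ≤ d) (T : Finset (Fin n))
    (y : Fin n → MvPolynomial (Fin n) F) (hT : ∀ i ∈ T, (y i).totalDegree ≤ d)
    (hT' : ∀ i ∉ T, (y i).totalDegree ≤ 1) (g : MvPolynomial (Fin n) F) :
    ¬ LinearIndependent F (fun p : Fin (d ^ T.card + 1) × (Fin n →₀ ℕ) =>
      g ^ (p.1 : ℕ) * aeval y (monomial p.2 (1 : F))) := by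
  intro hli
  set q := d ^ T.card with hq
  set w : Fin n → ℕ := fun i => if i ∈ T then d else 1 with hw
  have hw1 : ∀ i, 1 ≤ w i := by intro i; simp only [hw]; split_ifs <;> omega
  have hyw : ∀ i, (y i).totalDegree ≤ w i := by
    intro i; simp only [hw]; split_ifs with h
    · exact hT i h
    · exact hT' i h
  have finS : ∀ N, Finite {γ : Fin n →₀ ℕ // γ.degree ≤ N} := fun N =>
    (Finsupp.finite_of_degree_le N)
  have finW : ∀ N, Finite {γ : Fin n →₀ ℕ // ∑ i, w i * γ i ≤ N} := by
    intro N
    refine Set.Finite.subset (Finsupp.finite_of_degree_le N) ?_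
    intro γ hγ
    simp only [Set.mem_ofPred_eq] at hγ ⊢
    rw [Finsupp.degree_eq_sum]
    refine le_trans (Finset.sum_le_sum fun i _ => ?_) hγ
    exact Nat.le_mul_of_pos_left _ (hw1 i)
  refine growth_aux (fun N => Nat.card {γ : Fin n →₀ ℕ // γ.degree ≤ N}) n (q * g.totalDegree) q
    (card_degree_le n) ?_ (Nat.one_le_pow _ _ hd) ?_
  · have : Nonempty {γ : Fin n →₀ ℕ // γ.degree ≤ 0} := ⟨⟨0, by simp⟩⟩
    exact Nat.card_pos
  intro N
  have h1 : Nat.card {γ : Fin n →₀ ℕ // γ.degree ≤ N} ≤ q * Nat.card {γ : Fin n →₀ ℕ // ∑ i, w i * γ i ≤ N} := by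
    have inj : Function.Injective (fun γ : {γ : Fin n →₀ ℕ // γ.degree ≤ N} =>
      ((fun i : T => (⟨γ.1 i % d, Nat.mod_lt _ hd⟩ : Fin d),
        ⟨Finsupp.equivFunOnFinite.symm (fun i => γ.1 i / w i), by
          refine le_trans (Finset.sum_le_sum fun i _ => ?_) (γ.1.degree_eq_sum ▸ γ.2)
          simpa using Nat.mul_div_le _ _⟩) : (T → Fin d) × {γ : Fin n →₀ ℕ // ∑ i, w i * γ i ≤ N})) := by
      intro a b hab
      ext i
      simp only [Prod.mk.injEq, Subtype.mk.injEq] at hab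
      have h2 : a.1 i / w i = b.1 i / w i := by
        have := DFunLike.congr_fun hab.2 i
        simpa using this
      by_cases hi : i ∈ T
      · have h3 := congrFun hab.1 ⟨i, hi⟩
        simp only [Fin.mk.injEq] at h3
        simp only [hw, if_pos hi] at h2
        rw [← Nat.div_add_mod (a.1 i) d, h2, h3, Nat.div_add_mod]
      · simpa [hw, hi] using h2
    have := Nat.card_le_card_of_injective _ inj
    simpa [Nat.card_prod, hq] using this
  have h2 : (q+1) * Nat.card {γ : Fin n →₀ ℕ // ∑ i, w i * γ i ≤ N} ≤
      Nat.card {γ : Fin n →₀ ℕ // γ.degree ≤ N + q * g.totalDegree} := by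
    let V : Submodule F (MvPolynomial (Fin n) F) := restrictTotalDegree (Fin n) F (N + q * g.totalDegree)
    have hrank : Module.finrank F V = Nat.card {γ : Fin n →₀ ℕ // γ.degree ≤ N + q * g.totalDegree} := by
      have b : Module.Basis _ F V := basisRestrictSupport F _
      rw [Module.finrank_eq_nat_card_basis b]
      rfl
    have hmem : ∀ p : Fin (q+1) × {γ : Fin n →₀ ℕ // ∑ i, w i * γ i ≤ N},
        g ^ (p.1 : ℕ) * aeval y (monomial p.2.1 (1 : F)) ∈ V := by
      rintro ⟨a, γ, hγ⟩
      rw [mem_restrictTotalDegree]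
      refine (totalDegree_mul _ _).trans ?_
      rw [add_comm]
      refine add_le_add ?_ ?_
      · rw [aeval_monomial, map_one, one_mul, Finsupp.prod_fintype _ _ (by simp)]
        refine (totalDegree_finsetProd _ _).trans (le_trans (Finset.sum_le_sum fun i _ => ?_) hγ)
        refine (totalDegree_pow _ _).trans ?_
        rw [mul_comm]
        exact Nat.mul_le_mul_right _ (hyw i)
      · refine (totalDegree_pow _ _).trans ?_
        exact Nat.mul_le_mul_right _ (Nat.lt_succ_iff.mp a.2)
    have hli2 : LinearIndependent F (fun p : Fin (q+1) × {γ : Fin n →₀ ℕ // ∑ i, w i * γ i ≤ N} =>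
        (⟨_, hmem p⟩ : V)) := by
      refine LinearIndependent.of_comp V.subtype ?_
      refine hli.comp (fun p : Fin (q+1) × {γ : Fin n →₀ ℕ // ∑ i, w i * γ i ≤ N} => (p.1, p.2.1)) ?_
      rintro ⟨a, γ⟩ ⟨b, δ⟩ h
      simp only [Prod.mk.injEq] at h
      ext1
      · exact h.1
      · exact Subtype.ext h.2
    have := fun N => Fintype.ofFinite {γ : Fin n →₀ ℕ // ∑ i, w i * γ i ≤ N}
    have := hli2.fintype_card_le_finrank
    rw [hrank] at this
    simpa [Nat.card_eq_fintype_card] using this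
  calc (q+1) * Nat.card {γ : Fin n →₀ ℕ // γ.degree ≤ N} ≤ (q+1) * (q * Nat.card {γ : Fin n →₀ ℕ // ∑ i, w i * γ i ≤ N}) := by gcongr
    _ = q * ((q+1) * Nat.card {γ : Fin n →₀ ℕ // ∑ i, w i * γ i ≤ N}) := by ring
    _ ≤ _ := by gcongr

lemma der_zero_aux {F R E : Type*} [Field F] [CommRing R] [IsDomain R] [Algebra F R] [Field E]
    [Algebra F E] [Algebra R E] [IsScalarTower F R E] [FaithfulSMul R E]
    (P : Subalgebra F R) (g : R) (e : ℕ) (hchar : ringChar F = 0 ∨ e < ringChar F)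
    (hdep : ¬ LinearIndependent P (fun a : Fin (e+1) => g ^ (a : ℕ)))
    (D : Derivation F R E) (hD : ∀ x ∈ P, D x = 0) : D g = 0 := by
  have hex : ∃ k, ∃ q : Polynomial P, q ≠ 0 ∧ Polynomial.aeval g q = 0 ∧ q.natDegree = k ∧ k ≤ e := by
    rw [Fintype.not_linearIndependent_iff] at hdep
    obtain ⟨c, hc, i, hi⟩ := hdep
    refine ⟨_, ∑ a : Fin (e+1), Polynomial.monomial (a:ℕ) (c a), ?_, ?_, rfl, ?_⟩
    · intro h
      have := congrArg (fun q => Polynomial.coeff q i) h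
      simp only [Polynomial.finsetSum_coeff, Polynomial.coeff_monomial, Polynomial.coeff_zero] at this
      simp only [Fin.val_inj, Finset.sum_ite_eq', Finset.mem_univ, if_true] at this
      exact hi this
    · rw [map_sum, ← hc]
      simp [Polynomial.aeval_monomial, Algebra.smul_def]
    · refine Polynomial.natDegree_sum_le_of_forall_le _ _ fun a _ => ?_
      exact (Polynomial.natDegree_monomial_le _).trans (Nat.lt_succ_iff.mp a.2)
  obtain ⟨q, hq0, hq, hqk, hke⟩ := Nat.find_spec hex
  have hmin := fun k (hk : k < Nat.find hex) => Nat.find_min hex hk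
  set k := Nat.find hex
  have hk0 : k ≠ 0 := by
    intro h
    rw [h] at hqk
    rw [Polynomial.eq_C_of_natDegree_eq_zero hqk] at hq hq0
    rw [Polynomial.aeval_C] at hq
    apply hq0
    have : q.coeff 0 = 0 := Subtype.ext hq
    rw [this, map_zero]
  have hcast : ((k : ℕ) : F) ≠ 0 := by
    intro h
    have := (ringChar.spec F k).mp h
    rcases hchar with h0 | h0
    · rw [h0] at this; exact hk0 (Nat.eq_zero_of_zero_dvd this)
    · have := Nat.le_of_dvd (Nat.pos_of_ne_zero hk0) this
      omega
  have hcastP : ((k : ℕ) : P) ≠ 0 := by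
    intro h
    apply hcast
    apply (algebraMap F P).injective
    rw [map_natCast, h, map_zero]
  have hder : q.derivative ≠ 0 := by
    intro h
    have := congrArg (fun q => Polynomial.coeff q (k-1)) h
    simp only [Polynomial.coeff_derivative, Polynomial.coeff_zero] at this
    rw [show k - 1 + 1 = k by omega] at this
    have h2 : (((k-1 : ℕ) : P) + 1) = (k : P) := by
      rw [← Nat.cast_succ]; congr 1; omega
    rw [h2] at this
    rcases mul_eq_zero.mp this with h | h
    · rw [← hqk] at h
      exact hq0 (Polynomial.leadingCoeff_eq_zero.mp h)
    · exact hcastP h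
  have hder2 : Polynomial.aeval g q.derivative ≠ 0 := by
    intro h
    have hlt : q.derivative.natDegree < k := by
      rw [← hqk]; exact Polynomial.natDegree_derivative_lt (by omega)
    exact hmin _ hlt ⟨q.derivative, hder, h, rfl, by omega⟩
  have hsm : ∀ (c : P) (x : R), D (c • x) = c • D x := by
    intro c x
    rw [Algebra.smul_def, D.leibniz]
    have : D (algebraMap P R c) = 0 := hD _ c.2
    rw [this, smul_zero, add_zero, algebraMap_smul]
  let D' : Derivation P R E :=
    Derivation.mk' { toFun := D, map_add' := D.map_add, map_smul' := hsm } (fun a b => D.leibniz a b)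
  have h1 : D' (Polynomial.aeval g q) = Polynomial.aeval g q.derivative • D' g := D'.map_aeval q g
  rw [hq, map_zero, eq_comm, Algebra.smul_def, mul_eq_zero] at h1
  rcases h1 with h1 | h1
  · exact absurd ((FaithfulSMul.algebraMap_eq_zero_iff R E).mp h1) hder2
  · exact h1

lemma linIndep_abs {F P M R T S : Type*} [Field F] [CommRing P] [CommRing M] [CommRing R]
    [Algebra F P] [Algebra F M] [Algebra F R] [Algebra P M] [Algebra P R] [Algebra M R]
    [IsScalarTower F P M] [IsScalarTower F P R] [IsScalarTower F M R] [IsScalarTower P M R]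
    (u : T → P) (hu : AlgebraicIndependent F u) (z : S → R) (hz : AlgebraicIndependent M z)
    (g : M) (e : ℕ) (hg : LinearIndependent P (fun a : Fin e => g ^ (a : ℕ))) :
    LinearIndependent F (fun p : ((T →₀ ℕ) × Fin e) × (S →₀ ℕ) =>
      (p.1.1.prod fun i k => algebraMap P R (u i) ^ k) * algebraMap M R g ^ (p.1.2 : ℕ) *
        (p.2.prod fun i k => z i ^ k)) := by
  have L1 : LinearIndependent F (fun α : T →₀ ℕ => aeval u (monomial α (1 : F))) :=
    (basisMonomials T F).linearIndependent.map' (aeval u).toLinearMap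
      (LinearMap.ker_eq_bot.mpr hu)
  have L3 : LinearIndependent M (fun α : S →₀ ℕ => aeval z (monomial α (1 : M))) :=
    (basisMonomials S M).linearIndependent.map' (aeval z).toLinearMap
      (LinearMap.ker_eq_bot.mpr hz)
  have L := linearIndependent_smul (linearIndependent_smul L1 hg) L3
  convert L using 1
  funext p
  rw [aeval_monomial, map_one, one_mul, aeval_monomial, map_one, one_mul, Algebra.smul_def,
    Algebra.smul_def, map_mul, ← IsScalarTower.algebraMap_apply, map_pow, map_finsuppProd]
  simp only [map_pow]

lemma linIndep_aux {F R : Type*} [Field F] [CommRing R] [IsDomain R] [Algebra F R] {n : ℕ}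
    (y : Fin n → R) (hy : AlgebraicIndependent F y) (T : Set (Fin n)) (g : R)
    (hg : IsAlgebraic (Algebra.adjoin F (y '' T)) g) (e : ℕ)
    (hli : LinearIndependent (Algebra.adjoin F (y '' T)) (fun a : Fin e => g ^ (a : ℕ))) :
    LinearIndependent F (fun p : Fin e × (Fin n →₀ ℕ) =>
      g ^ (p.1 : ℕ) * aeval y (monomial p.2 (1 : F))) := by
  obtain ⟨h1, h2⟩ := (AlgebraicIndependent.iff_adjoin_image T).mp hy
  generalize hP : Algebra.adjoin F (y '' T) = P at *
  have h3 : AlgebraicIndependent (Subalgebra.algebraicClosure P R) (fun i : ↥Tᶜ => y i) :=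
    h2.subalgebraAlgebraicClosure
  let yT : T → P := fun i => ⟨y i, hP ▸ Algebra.subset_adjoin ⟨i, i.2, rfl⟩⟩
  have h1' : AlgebraicIndependent F yT := AlgebraicIndependent.of_comp P.val h1
  let gM : Subalgebra.algebraicClosure P R := ⟨g, hg⟩
  have L2 : LinearIndependent P (fun a : Fin e => gM ^ (a : ℕ)) := by
    refine LinearIndependent.of_comp (Subalgebra.algebraicClosure P R).val.toLinearMap ?_
    exact hli
  have L := linIndep_abs yT h1' _ h3 gM e L2
  have hφ : Function.Injective (fun p : Fin e × (Fin n →₀ ℕ) =>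
      (((p.2.subtypeDomain (· ∈ T), p.1), p.2.subtypeDomain (· ∈ Tᶜ)) :
        ((T →₀ ℕ) × Fin e) × (↥Tᶜ →₀ ℕ))) := by
    rintro ⟨a, γ⟩ ⟨b, δ⟩ h
    simp only [Prod.mk.injEq] at h
    obtain ⟨⟨h1, h2⟩, h3⟩ := h
    refine Prod.ext h2 ?_
    ext i
    by_cases hi : i ∈ T
    · exact DFunLike.congr_fun h1 ⟨i, hi⟩
    · exact DFunLike.congr_fun h3 ⟨i, hi⟩
  have L' := L.comp _ hφ
  convert L' using 1
  funext p
  obtain ⟨a, γ⟩ := p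
  simp only [Function.comp]
  have e1 : (γ.subtypeDomain (· ∈ T)).prod (fun i k => algebraMap P R (yT i) ^ k) =
      ∏ i : {i // i ∈ T}, y i ^ γ i := by
    rw [Finsupp.prod_fintype _ _ (by simp)]
    rfl
  have e2 : (γ.subtypeDomain (· ∈ Tᶜ)).prod (fun i k => y i ^ k) =
      ∏ i : {i // ¬ i ∈ T}, y i ^ γ i := by
    rw [Finsupp.prod_fintype _ _ (by simp)]
    rfl
  have e3 : algebraMap (Subalgebra.algebraicClosure P R) R gM = g := rfl
  rw [aeval_monomial, map_one, one_mul, Finsupp.prod_fintype _ _ (by simp),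
    ← Fintype.prod_subtype_mul_prod_subtype (· ∈ T) (fun i => y i ^ γ i), ← e1, ← e2, e3]
  ring

lemma mkDer_apply {F E : Type*} [Field F] {n : ℕ} [Field E]
    [Algebra F E] [Algebra (MvPolynomial (Fin n) F) E] [IsScalarTower F (MvPolynomial (Fin n) F) E]
    (v : Fin n → E) (g : MvPolynomial (Fin n) F) :
    (mkDerivation F v : Derivation F (MvPolynomial (Fin n) F) E) g =
      ∑ j, algebraMap (MvPolynomial (Fin n) F) E (pderiv j g) * v j := by
  have : (mkDerivation F v : Derivation F (MvPolynomial (Fin n) F) E) =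
      ∑ j, (LinearMap.toSpanSingleton (MvPolynomial (Fin n) F) E (v j)).compDer (pderiv j) := by
    apply derivation_ext
    intro i
    rw [mkDerivation_X, ← Derivation.coeFnAddMonoidHom_apply, map_sum, Finset.sum_apply]
    simp [pderiv_X, Pi.single_apply, ite_smul]
  rw [this, ← Derivation.coeFnAddMonoidHom_apply, map_sum, Finset.sum_apply]
  simp [Algebra.smul_def]

lemma rank_aux {F E : Type*} [Field F] [Field E] {n m : ℕ} [Algebra F E]
    [Algebra (MvPolynomial (Fin n) F) E] [IsScalarTower F (MvPolynomial (Fin n) F) E]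
    [FaithfulSMul (MvPolynomial (Fin n) F) E]
    (d : ℕ) (hd : 1 ≤ d) (f : Fin m → MvPolynomial (Fin n) F)
    (y : Fin n → MvPolynomial (Fin n) F) (hy : IsTranscendenceBasis F y) (T : Finset (Fin n))
    (hT : ∀ i ∈ T, (y i).totalDegree ≤ d) (hT' : ∀ i ∉ T, (y i).totalDegree ≤ 1)
    (hTf : ∀ i ∈ T, ∃ k, f k = y i)
    (hf : ∀ k, IsAlgebraic (Algebra.adjoin F (y '' T)) (f k))
    (hchar : ringChar F = 0 ∨ d ^ T.card < ringChar F) :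
    Matrix.rank (Matrix.of fun (i : Fin m) (j : Fin n) =>
        algebraMap (MvPolynomial (Fin n) F) E (pderiv j (f i))) = T.card := by
  set J : Matrix (Fin m) (Fin n) E := Matrix.of fun (i : Fin m) (j : Fin n) =>
        algebraMap (MvPolynomial (Fin n) F) E (pderiv j (f i)) with hJ
  let B : Matrix (Fin n) (Fin n) E := Matrix.of fun i j =>
        algebraMap (MvPolynomial (Fin n) F) E (pderiv j (y i))
  let D : (Fin n → E) → Derivation F (MvPolynomial (Fin n) F) E := fun v => mkDerivation F v
  have hJD : ∀ v i, J.mulVec v i = D v (f i) := fun v i => (mkDer_apply v (f i)).symm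
  have hBD : ∀ v i, B.mulVec v i = D v (y i) := fun v i => (mkDer_apply v (y i)).symm
  have key : ∀ (U : Set (Fin n)) (g : MvPolynomial (Fin n) F) (v : Fin n → E),
      IsAlgebraic (Algebra.adjoin F (y '' U)) g → (∀ i ∈ U, D v (y i) = 0) → D v g = 0 := by
    intro U g v hg hv
    refine der_zero_aux (Algebra.adjoin F (y '' U)) g (d ^ T.card) hchar ?_ (D v) ?_
    · intro h
      exact count_le d hd T y hT hT' g (linIndep_aux y hy.1 U g hg _ h)
    · intro x hx
      refine Derivation.eqOn_adjoin (D2 := 0) ?_ hx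
      rintro _ ⟨i, hi, rfl⟩
      exact hv i hi
  have hBinj : Function.Injective B.mulVecLin := by
    rw [← LinearMap.ker_eq_bot, LinearMap.ker_eq_bot']
    intro v hv
    funext j
    have h1 : D v (X j) = 0 := by
      refine key Set.univ (X j) v ?_ ?_
      · rw [Set.image_univ]
        exact hy.isAlgebraic.isAlgebraic _
      · intro i _
        rw [← hBD, ← Matrix.mulVecLin_apply, hv]; rfl
    simpa [D, mkDerivation_X] using h1
  have hBsurj : Function.Surjective B.mulVecLin := LinearMap.injective_iff_surjective.mp hBinj
  let L : (Fin n → E) →ₗ[E] (T → E) := (LinearMap.funLeft E E (fun i : T => (i : Fin n))).comp B.mulVecLin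
  have hL : ∀ v i, L v i = D v (y i) := fun v i => hBD v i
  have hLsurj : Function.Surjective L :=
    (LinearMap.funLeft_surjective_of_injective E E _ Subtype.val_injective).comp hBsurj
  have hker : LinearMap.ker J.mulVecLin = LinearMap.ker L := by
    ext v
    rw [LinearMap.mem_ker, LinearMap.mem_ker]
    constructor
    · intro h
      funext i
      obtain ⟨k, hk⟩ := hTf i i.2
      rw [hL, ← hk, ← hJD, ← Matrix.mulVecLin_apply, h]; rfl
    · intro h
      funext k
      rw [Matrix.mulVecLin_apply, hJD]
      refine key T (f k) v (hf k) ?_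
      intro i hi
      have := congrFun h ⟨i, hi⟩
      rw [hL] at this
      exact this
  have r1 := J.mulVecLin.finrank_range_add_finrank_ker
  have r2 := L.finrank_range_add_finrank_ker
  rw [LinearMap.range_eq_top.mpr hLsurj, finrank_top, Module.finrank_fintype_fun_eq_card] at r2
  rw [hker] at r1
  have : J.rank = Module.finrank E (LinearMap.range J.mulVecLin) := rfl
  simp only [Fintype.card_coe] at r2
  omega

/-- Jacobian criterion for algebraic independence: if `f₁,…,f_m ∈ F[x₁,…,xₙ]`
have total degree at most `d` and transcendence degree at most `r`, and
`char F = 0` or `char F > d^r`, then the transcendence degree of `{f₁,…,f_m}`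
equals the rank, over the rational function field `F(x₁,…,xₙ)`, of the Jacobian
matrix `(∂fᵢ/∂xⱼ)`. -/
theorem jacobian_criterion (F : Type*) [Field F] (n m d r : ℕ)
    (f : Fin m → MvPolynomial (Fin n) F)
    (hdeg : ∀ i, (f i).totalDegree ≤ d)
    (htr : fintrdeg F (Finset.image f Finset.univ) ≤ r)
    (hchar : ringChar F = 0 ∨ d ^ r < ringChar F) :
    fintrdeg F (Finset.image f Finset.univ) =
      Matrix.rank (Matrix.of fun (i : Fin m) (j : Fin n) =>
        algebraMap (MvPolynomial (Fin n) F) (FractionRing (MvPolynomial (Fin n) F))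
          (MvPolynomial.pderiv j (f i))) := by

  obtain ⟨t, hts, htc, hti⟩ : ∃ t : Finset (MvPolynomial (Fin n) F), t ⊆ Finset.image f Finset.univ ∧
      t.card = fintrdeg F (Finset.image f Finset.univ) ∧
      AlgebraicIndependent F (fun x : (t : Set (MvPolynomial (Fin n) F)) =>
        (x : MvPolynomial (Fin n) F)) := by
    refine Nat.sSup_mem (s := {m | ∃ t : Finset (MvPolynomial (Fin n) F),
      t ⊆ Finset.image f Finset.univ ∧ t.card = m ∧
      AlgebraicIndependent F (fun x : (t : Set (MvPolynomial (Fin n) F)) =>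
        (x : MvPolynomial (Fin n) F))}) ⟨0, ∅, by simp, by simp, ?_⟩ ?_
    · rw [Finset.coe_empty]
      exact algebraicIndependent_empty
    · refine ⟨(Finset.image f Finset.univ).card, ?_⟩
      rintro _ ⟨t, ht, rfl, _⟩
      exact Finset.card_le_card ht
  have hmax : ∀ k, IsAlgebraic (Algebra.adjoin F (t : Set (MvPolynomial (Fin n) F))) (f k) := by
    intro k
    by_contra h
    have hnot : f k ∉ t := by
      intro hk
      exact h (isAlgebraic_algebraMap
        (⟨f k, Algebra.subset_adjoin hk⟩ : Algebra.adjoin F (t : Set (MvPolynomial (Fin n) F))))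
    have hins : AlgebraicIndepOn F id (insert (f k) (t : Set (MvPolynomial (Fin n) F))) := by
      refine AlgebraicIndepOn.insert hti ?_
      rw [Set.image_id]
      exact h
    have hle : (insert (f k) t).card ≤ fintrdeg F (Finset.image f Finset.univ) := by
      refine le_csSup ?_ ⟨insert (f k) t, ?_, rfl, ?_⟩
      · refine ⟨(Finset.image f Finset.univ).card, ?_⟩
        rintro _ ⟨t, ht, rfl, _⟩
        exact Finset.card_le_card ht
      · refine Finset.insert_subset ?_ hts
        simp
      · rw [Finset.coe_insert]
        exact hins
    rw [Finset.card_insert_of_notMem hnot, htc] at hle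
    omega
  have halg : Algebra.IsAlgebraic (Algebra.adjoin F
      ((t : Set (MvPolynomial (Fin n) F)) ∪ Set.range X)) (MvPolynomial (Fin n) F) := by
    refine ⟨fun g => isAlgebraic_algebraMap
      (⟨g, ?_⟩ : Algebra.adjoin F ((t : Set (MvPolynomial (Fin n) F)) ∪ Set.range X))⟩
    refine Algebra.adjoin_mono Set.subset_union_right ?_
    rw [adjoin_range_X]
    trivial
  obtain ⟨u, htu, hut, hu⟩ := exists_isTranscendenceBasis_between (R := F)
    (t : Set (MvPolynomial (Fin n) F)) (t ∪ Set.range X) Set.subset_union_left hti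
  have hX : IsTranscendenceBasis F (X : Fin n → MvPolynomial (Fin n) F) :=
    IsTranscendenceBasis.mvPolynomial _ _
  obtain ⟨ε⟩ : Nonempty (Fin n ≃ u) := Cardinal.lift_mk_eq'.mp (hX.lift_cardinalMk_eq hu)
  let y : Fin n → MvPolynomial (Fin n) F := fun i => ε i
  have hy : IsTranscendenceBasis F y := (isTranscendenceBasis_equiv ε).mpr hu
  have hyinj : Function.Injective y := Subtype.val_injective.comp ε.injective
  let T : Finset (Fin n) := Finset.univ.filter fun i => y i ∈ t
  have hTt : T.image y = t := by
    ext g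
    simp only [T, Finset.mem_image, Finset.mem_filter, Finset.mem_univ, true_and]
    constructor
    · rintro ⟨i, hi, rfl⟩; exact hi
    · intro hg
      refine ⟨ε.symm ⟨g, htu hg⟩, ?_⟩
      simp [y, hg]
  have hTc : T.card = fintrdeg F (Finset.image f Finset.univ) := by
    rw [← htc, ← hTt, Finset.card_image_of_injective _ hyinj]
  have hTt' : y '' (T : Set (Fin n)) = (t : Set (MvPolynomial (Fin n) F)) := by
    rw [← hTt, Finset.coe_image]
  rw [← hTc] at htr ⊢
  have hTf : ∀ i ∈ T, ∃ k, f k = y i := by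
    intro i hi
    have := hts (Finset.mem_filter.mp hi).2
    simpa using this
  refine (rank_aux (max d 1) (le_max_right _ _) f y hy T ?_ ?_ hTf ?_ ?_).symm
  · intro i hi
    obtain ⟨k, hk⟩ := hTf i hi
    rw [← hk]
    exact (hdeg k).trans (le_max_left _ _)
  · intro i hi
    rcases hut (ε i).2 with h | ⟨j, hj⟩
    · exact absurd (Finset.mem_filter.mpr ⟨Finset.mem_univ i, h⟩) hi
    · change (ε i : MvPolynomial (Fin n) F).totalDegree ≤ 1
      rw [← hj, totalDegree_X]
  · intro k
    rw [hTt']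
    exact hmax k
  · rcases hchar with h | h
    · exact Or.inl h
    · right
      rcases Nat.eq_zero_or_pos d with h0 | h0
      · subst h0
        have h1 : ringChar F ≠ 1 := CharP.ringChar_ne_one
        have h2 : 0 < ringChar F := lt_of_le_of_lt (Nat.zero_le _) h
        simp only [zero_le, sup_of_le_right, one_pow]
        omega
      · rw [max_eq_left h0]
        exact (Nat.pow_le_pow_right h0 htr).trans_lt h
end

section
/- Lifting a linear dependence through the shift (transfer identity): Let R be a commutative F-algebra over a field F, let ℓ ≥ 1, and let z_1,…,z_ℓ ∈ R and t_1,…,t_ℓ ∈ F be such that each u_i := 1 + t_i·z_i is a unit of R; set z'_i := z_i·u_i^{-1}. Suppose scalars α_S ∈ F for S ⊆ {1,…,ℓ} satisfy Σ_{S ⊆ {1,…,ℓ}} α_S · Π_{i∈S} z_i = 0. Then Σ_{S ⊆ {1,…,ℓ}} α_S · (Π_{i∈S} z'_i) · (Π_{i∈{1,…,ℓ}∖S} (1 − t_i·z'_i)) = 0. -/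
/-- Lifting a linear dependence through the shift (transfer identity): if each
`uᵢ = 1 + tᵢ zᵢ` is a unit of the commutative `F`-algebra `R`, `z'ᵢ = zᵢ uᵢ⁻¹`,
and `Σ_S α_S Π_{i∈S} zᵢ = 0`, then
`Σ_S α_S (Π_{i∈S} z'ᵢ) (Π_{i∉S} (1 - tᵢ z'ᵢ)) = 0`. -/
theorem transfer_lift (F : Type*) [Field F] (R : Type*) [CommRing R] [Algebra F R]
    (ℓ : ℕ) (hℓ : 1 ≤ ℓ) (z : Fin ℓ → R) (t : Fin ℓ → F)
    (hu : ∀ i, IsUnit (1 + t i • z i))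
    (α : Finset (Fin ℓ) → F)
    (hdep : ∑ S : Finset (Fin ℓ), α S • ∏ i ∈ S, z i = 0) :
    ∑ S : Finset (Fin ℓ), α S •
        ((∏ i ∈ S, z i * Ring.inverse (1 + t i • z i)) *
          ∏ i ∈ Sᶜ, (1 - t i • (z i * Ring.inverse (1 + t i • z i)))) = 0 := by
  have h1 : ∀ i, 1 - t i • (z i * Ring.inverse (1 + t i • z i))
      = Ring.inverse (1 + t i • z i) := by
    intro i
    have h := Ring.mul_inverse_cancel _ (hu i)
    rw [add_mul, one_mul, smul_mul_assoc] at h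
    exact sub_eq_of_eq_add h.symm
  simp only [h1]
  have h2 : ∀ S : Finset (Fin ℓ),
      α S • ((∏ i ∈ S, z i * Ring.inverse (1 + t i • z i)) *
          ∏ i ∈ Sᶜ, Ring.inverse (1 + t i • z i))
      = (α S • ∏ i ∈ S, z i) * ∏ i, Ring.inverse (1 + t i • z i) := by
    intro S
    rw [Finset.prod_mul_distrib, mul_assoc, Finset.prod_mul_prod_compl, smul_mul_assoc]
  simp only [h2]
  rw [← Finset.sum_mul, hdep, zero_mul]
end

section
/- Low-support rank concentration for products of disjoint-variable linear factors after a shift (toy model of ASS13): Let F be an infinite field, k, n ≥ 1, and z_1,…,z_n ∈ F^k, where F^k is the commutative ring with coordinatewise operations. Let ℓ := ⌊log₂ k⌋ + 2. Then there exist t_1,…,t_n ∈ F such that the shifted polynomial D' = Π_{i=1}^{n} (1 + z_i·(x_i + t_i)) ∈ (F^k)[x_1,…,x_n] is ℓ-concentrated. -/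
namespace SC
open MvPolynomial

/-- exponent vector of a set -/
noncomputable def ind {n : ℕ} (S : Finset (Fin n)) : Fin n →₀ ℕ :=
  ∑ i ∈ S, Finsupp.single i 1

lemma ind_apply {n : ℕ} (S : Finset (Fin n)) (j : Fin n) :
    ind S j = if j ∈ S then 1 else 0 := by
  simp [ind, Finsupp.finsetSum_apply, Finsupp.single_apply]

lemma ind_support {n : ℕ} (S : Finset (Fin n)) : (ind S).support = S := by
  ext j; simp [ind_apply]

lemma ind_inj {n : ℕ} {S T : Finset (Fin n)} : ind S = ind T ↔ S = T := by
  constructor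
  · intro h; rw [← ind_support S, h, ind_support]
  · rintro rfl; rfl

lemma monomial_ind {n : ℕ} {R : Type*} [CommRing R] (S : Finset (Fin n)) (a : R) :
    monomial (ind S) a = C a * ∏ i ∈ S, (X i : MvPolynomial (Fin n) R) := by
  have : ∏ i ∈ S, (X i : MvPolynomial (Fin n) R) = monomial (ind S) 1 := by
    unfold ind
    rw [monomial_sum_one]
    rfl
  rw [this, C_mul_monomial, mul_one]

variable {F : Type*} [Field F] {k n : ℕ}

/-- the coefficient of the shifted product -/
noncomputable def u (z : Fin n → (Fin k → F)) (t : Fin n → F) (S : Finset (Fin n)) : Fin k → F :=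
  (∏ i ∈ S, z i) * ∏ i ∈ Sᶜ, (1 + t i • z i)

lemma prod_eq (z : Fin n → (Fin k → F)) (t : Fin n → F) :
    (∏ i : Fin n, (1 + C (z i) * (X i + C (algebraMap F (Fin k → F) (t i))))) =
      ∑ S : Finset (Fin n), monomial (ind S) (u z t S) := by
  have : ∀ i : Fin n, (1 + C (z i) * (X i + C (algebraMap F (Fin k → F) (t i)))) =
      C (z i) * X i + C (1 + t i • z i) := by
    intro i
    rw [Algebra.smul_def]
    simp only [map_add, map_mul, map_one]
    ring
  simp_rw [this]
  rw [Finset.prod_add, Finset.powerset_univ]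
  refine Finset.sum_congr rfl fun S _ => ?_
  rw [monomial_ind, u, Finset.prod_mul_distrib, ← Finset.compl_eq_univ_sdiff, map_mul, map_prod,
    map_prod]
  ring

lemma coeff_eq (z : Fin n → (Fin k → F)) (t : Fin n → F) (m : Fin n →₀ ℕ) :
    coeff m (∏ i : Fin n, (1 + C (z i) * (X i + C (algebraMap F (Fin k → F) (t i))))) =
      ∑ S : Finset (Fin n), if ind S = m then u z t S else 0 := by
  classical
  rw [prod_eq, coeff_sum]
  simp [coeff_monomial]

lemma coeff_ind (z : Fin n → (Fin k → F)) (t : Fin n → F) (S : Finset (Fin n)) :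
    coeff (ind S) (∏ i : Fin n, (1 + C (z i) * (X i + C (algebraMap F (Fin k → F) (t i))))) =
      u z t S := by
  rw [coeff_eq]
  simp [ind_inj]

/-- linear relation -/
lemma exists_rel (z : Fin n → (Fin k → F)) (S : Finset (Fin n)) (hS : k < 2 ^ S.card) :
    ∃ c : Finset (Fin n) → F, ∑ T ∈ S.powerset, c T • ∏ i ∈ T, z i = 0 ∧
      ∃ T ∈ S.powerset, c T ≠ 0 := by
  classical
  by_cases hinj : Set.InjOn (fun T => ∏ i ∈ T, z i) (S.powerset : Set (Finset (Fin n)))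
  · obtain ⟨f, hf, x, hx, hx0⟩ := Module.exists_nontrivial_relation_of_finrank_lt_card
      (R := F) (M := Fin k → F) (t := S.powerset.image (fun T => ∏ i ∈ T, z i))
      (by rw [Finset.card_image_of_injOn hinj]; simpa using hS)
    rw [Finset.sum_image hinj] at hf
    obtain ⟨T, hT, rfl⟩ := Finset.mem_image.1 hx
    exact ⟨fun T => f (∏ i ∈ T, z i), hf, T, hT, hx0⟩
  · simp only [Set.InjOn, not_forall] at hinj
    obtain ⟨A, hA, B, hB, hAB, hne⟩ := hinj
    refine ⟨fun T => if T = A then 1 else if T = B then -1 else 0, ?_, A, hA, by simp⟩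
    have h2 : ∀ T, ((if T = A then 1 else if T = B then -1 else 0 : F) • ∏ i ∈ T, z i) =
       (if T = A then ∏ i ∈ T, z i else 0) - (if T = B then ∏ i ∈ T, z i else 0) := by
      intro T
      by_cases h1 : T = A
      · have : T ≠ B := fun h => hne (h1 ▸ h)
        simp [h1, hne]
      · by_cases h3 : T = B
        · rw [if_neg h1, if_neg h1, if_pos h3, if_pos h3]; simp
        · simp [h1, h3]
    simp only [h2, Finset.sum_sub_distrib]
    rw [Finset.sum_ite_eq' , Finset.sum_ite_eq', if_pos (by simpa using hA), if_pos (by simpa using hB)]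
    exact sub_eq_zero.2 hAB

lemma exists_t [Infinite F] (c : Finset (Fin n) → Finset (Fin n) → F) (𝒮 : Finset (Finset (Fin n)))
    (hc : ∀ S ∈ 𝒮, ∃ T ∈ S.powerset, c S T ≠ 0) :
    ∃ t : Fin n → F, ∀ S ∈ 𝒮, ∑ T ∈ S.powerset, c S T * ∏ i ∈ S \ T, (- t i) ≠ 0 := by
  classical
  let P : Finset (Fin n) → MvPolynomial (Fin n) F := fun S =>
    ∑ T ∈ S.powerset, monomial (ind (S \ T)) (c S T)
  have hP : ∏ S ∈ 𝒮, P S ≠ 0 := by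
    rw [Finset.prod_ne_zero_iff]
    intro S hS h0
    obtain ⟨T, hT, hne⟩ := hc S hS
    apply hne
    have := congrArg (coeff (ind (S \ T))) h0
    simp only [P, coeff_sum, coeff_monomial, ind_inj, coeff_zero] at this
    rw [Finset.sum_eq_single T] at this
    · simpa using this
    · intro T' hT' hn
      rw [if_neg]
      intro h
      apply hn
      rw [← Finset.sdiff_sdiff_eq_self (Finset.mem_powerset.1 hT'), h,
        Finset.sdiff_sdiff_eq_self (Finset.mem_powerset.1 hT)]
    · intro h; exact absurd hT h
  obtain ⟨s, hs⟩ : ∃ s, eval s (∏ S ∈ 𝒮, P S) ≠ 0 := by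
    by_contra! h
    exact hP (MvPolynomial.funext fun s => by simpa using h s)
  rw [map_prod, Finset.prod_ne_zero_iff] at hs
  refine ⟨fun i => - s i, fun S hS => ?_⟩
  have := hs S hS
  simpa [P, monomial_ind, map_sum, map_prod] using this

lemma expand (z : Fin n → (Fin k → F)) (t : Fin n → F) (S S0 T : Finset (Fin n))
    (h0 : S0 ⊆ S) (hT : T ⊆ S0) :
    (∏ i ∈ T, z i) * ((∏ i ∈ S \ S0, z i) * ∏ i ∈ Sᶜ, (1 + t i • z i)) =
      ∑ V ∈ (S0 \ T).powerset, (∏ i ∈ V, (- t i)) • u z t ((T ∪ (S \ S0)) ∪ V) := by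
  classical
  have h1 : ∏ i ∈ S0 \ T, ((- t i) • z i + (1 + t i • z i)) = 1 := by
    apply Finset.prod_eq_one; intro i _
    rw [neg_smul]; ring
  rw [Finset.prod_add] at h1
  refine (mul_one _).symm.trans ?_
  refine (congrArg (_ * ·) h1.symm).trans ?_
  rw [Finset.mul_sum]
  refine Finset.sum_congr rfl fun V hV => ?_
  have hV := Finset.mem_powerset.1 hV
  have e1 : ((T ∪ (S \ S0)) ∪ V)ᶜ = Sᶜ ∪ ((S0 \ T) \ V) := by
    ext i
    have a := @h0 i; have b := @hT i; have d := @hV i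
    simp only [Finset.mem_compl, Finset.mem_union, Finset.mem_sdiff] at *
    tauto
  have d1 : Disjoint Sᶜ ((S0 \ T) \ V) := by
    rw [Finset.disjoint_left]; intro i hi hi'
    simp only [Finset.mem_compl, Finset.mem_sdiff] at *
    exact hi (h0 hi'.1.1)
  have d2 : Disjoint T (S \ S0) := by
    rw [Finset.disjoint_left]; intro i hi hi'
    simp only [Finset.mem_sdiff] at *
    exact hi'.2 (hT hi)
  have d3 : Disjoint (T ∪ (S \ S0)) V := by
    rw [Finset.disjoint_left]; intro i hi hi'
    have := hV hi'
    simp only [Finset.mem_union, Finset.mem_sdiff] at *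
    tauto
  rw [u, e1, Finset.prod_union d1, Finset.prod_union d3, Finset.prod_union d2]
  have e2 : ∏ i ∈ V, ((- t i) • z i) = (∏ i ∈ V, (- t i)) • ∏ i ∈ V, z i := by
    rw [Finset.prod_smul]
  rw [e2]
  simp only [smul_mul_assoc, mul_smul_comm]
  congr 1
  ring

end SC


/-- A polynomial `f` over the Hadamard algebra `F^k` (the ring `Fin k → F` with
coordinatewise operations) is `ℓ`-concentrated if the `F`-linear span of the
coefficients of its monomials of support size `< ℓ` equals the `F`-linear span
of all of its coefficients. -/
def Concentrated (F : Type*) [Field F] {k n : ℕ} (ℓ : ℕ)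
    (f : MvPolynomial (Fin n) (Fin k → F)) : Prop :=
  Submodule.span F
      {v : Fin k → F | ∃ m : Fin n →₀ ℕ, m.support.card < ℓ ∧ v = MvPolynomial.coeff m f} =
    Submodule.span F {v : Fin k → F | ∃ m : Fin n →₀ ℕ, v = MvPolynomial.coeff m f}

/-- Low-support rank concentration after a shift (toy model of ASS13): over an
infinite field `F`, for any `z₁,…,zₙ ∈ F^k` there exist shifts `t₁,…,tₙ ∈ F`
(acting as constant vectors) such that
`D' = Π_{i=1}^n (1 + zᵢ·(xᵢ + tᵢ))` is `(⌊log₂ k⌋ + 2)`-concentrated. -/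
theorem shift_concentration (F : Type*) [Field F] [Infinite F] (k n : ℕ)
    (hk : 1 ≤ k) (hn : 1 ≤ n) (z : Fin n → (Fin k → F)) :
    ∃ t : Fin n → F,
      Concentrated F (Nat.log 2 k + 2)
        (∏ i : Fin n,
          (1 + MvPolynomial.C (z i) *
            (MvPolynomial.X i + MvPolynomial.C (algebraMap F (Fin k → F) (t i))))) := by
  classical
  have hrel : ∀ S : Finset (Fin n), ∃ c : Finset (Fin n) → F, k < 2 ^ S.card →
      (∑ T ∈ S.powerset, c T • ∏ i ∈ T, z i = 0 ∧ ∃ T ∈ S.powerset, c T ≠ 0) := by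
    intro S
    by_cases h : k < 2 ^ S.card
    · obtain ⟨c, hc⟩ := SC.exists_rel z S h
      exact ⟨c, fun _ => hc⟩
    · exact ⟨0, fun h' => absurd h' h⟩
  choose c hc using hrel
  obtain ⟨t, ht⟩ := SC.exists_t c (Finset.univ.filter fun S => k < 2 ^ S.card)
    (fun S hS => (hc S (Finset.mem_filter.1 hS).2).2)
  refine ⟨t, ?_⟩
  unfold Concentrated
  apply le_antisymm
  · apply Submodule.span_mono
    rintro v ⟨m, _, rfl⟩
    exact ⟨m, rfl⟩
  set W := Submodule.span F {v : Fin k → F | ∃ m : Fin n →₀ ℕ,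
    m.support.card < Nat.log 2 k + 2 ∧ v = MvPolynomial.coeff m (∏ i : Fin n,
          (1 + MvPolynomial.C (z i) *
            (MvPolynomial.X i + MvPolynomial.C (algebraMap F (Fin k → F) (t i)))))} with hW
  have key : ∀ N : ℕ, ∀ S : Finset (Fin n), S.card = N → SC.u z t S ∈ W := by
    intro N
    induction N using Nat.strong_induction_on with
    | _ N ih =>
    intro S hS
    by_cases hlow : S.card < Nat.log 2 k + 2
    · apply Submodule.subset_span
      exact ⟨SC.ind S, by rwa [SC.ind_support], (SC.coeff_ind z t S).symm⟩
    obtain ⟨S0, h0, hcard⟩ := Finset.exists_subset_card_eq (s := S) (n := Nat.log 2 k + 1) (by omega)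
    have hk2 : k < 2 ^ S0.card := by
      rw [hcard]; exact Nat.lt_pow_succ_log_self (by norm_num) k
    have hP := ht S0 (by simpa using hk2)
    have hsum := (hc S0 hk2).1
    have hmul := congrArg
      (· * ((∏ i ∈ S \ S0, z i) * ∏ i ∈ Sᶜ, (1 + t i • z i))) hsum
    simp only [Finset.sum_mul, zero_mul, smul_mul_assoc] at hmul
    have hterm : ∀ T ∈ S0.powerset,
        c S0 T • ((∏ i ∈ T, z i) * ((∏ i ∈ S \ S0, z i) * ∏ i ∈ Sᶜ, (1 + t i • z i))) -
          (c S0 T * ∏ i ∈ S0 \ T, (- t i)) • SC.u z t S ∈ W := by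
      intro T hT
      have hT := Finset.mem_powerset.1 hT
      rw [mul_smul, ← smul_sub]
      apply Submodule.smul_mem
      rw [SC.expand z t S S0 T h0 hT]
      rw [← Finset.sum_erase_add _ _ (Finset.mem_powerset_self (S0 \ T))]
      have e : (T ∪ (S \ S0)) ∪ (S0 \ T) = S := by
        ext i
        have a := @h0 i; have b := @hT i
        simp only [Finset.mem_union, Finset.mem_sdiff] at *
        tauto
      rw [e, add_sub_cancel_right]
      apply Submodule.sum_mem
      intro V hV
      apply Submodule.smul_mem
      rw [Finset.mem_erase, Finset.mem_powerset] at hV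
      refine ih _ ?_ _ rfl
      rw [← hS]
      apply Finset.card_lt_card
      rw [Finset.ssubset_iff_of_subset]
      · have : ∃ x ∈ S0 \ T, x ∉ V := by
          by_contra! h
          exact hV.1 (Finset.Subset.antisymm hV.2 h)
        obtain ⟨x, hx, hxV⟩ := this
        have := @h0 x
        refine ⟨x, by simp only [Finset.mem_sdiff] at hx; tauto, ?_⟩
        simp only [Finset.mem_union, Finset.mem_sdiff] at *
        tauto
      · conv_rhs => rw [← e]
        exact Finset.union_subset_union_right hV.2
    have hs := Submodule.sum_mem W hterm
    rw [Finset.sum_sub_distrib, hmul, zero_sub, ← Finset.sum_smul, Submodule.neg_mem_iff] at hs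
    exact (Submodule.smul_mem_iff W hP).1 hs
  apply Submodule.span_le.2
  rintro v ⟨m, rfl⟩
  rw [SC.coeff_eq]
  apply Submodule.sum_mem
  intro S _
  split_ifs
  · exact key _ S rfl
  · exact W.zero_mem
end

section
/- Splitting a power of a sum of powers of linear forms into a depth-3 expression: Let F be an algebraically closed field of characteristic zero, let ℓ_1,…,ℓ_s ∈ F[x_1,…,x_n] be polynomials of degree at most 1, let e_1,…,e_s ≥ 1 be integers, and let a ≥ 1. Then there exist, for 1 ≤ u ≤ sa+1, constants c_u ∈ F and polynomials L_{u,1},…,L_{u,d_u} ∈ F[x_1,…,x_n] of degree at most 1 with d_u ≤ a·(e_1 + ⋯ + e_s), such that (ℓ_1^{e_1} + ℓ_2^{e_2} + ⋯ + ℓ_s^{e_s})^a = Σ_{u=1}^{sa+1} c_u · Π_{v=1}^{d_u} L_{u,v}. -/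
open Polynomial in
lemma split_aux {F : Type*} [Field F] [IsAlgClosed F] {n : ℕ} (p : F[X]) (m : ℕ)
    (hp : p.natDegree ≤ m) (l : MvPolynomial (Fin n) F) (hl : l.totalDegree ≤ 1) :
    ∃ (c : F) (S : Multiset (MvPolynomial (Fin n) F)), S.card ≤ m ∧
      (∀ q ∈ S, q.totalDegree ≤ 1) ∧ aeval l p = MvPolynomial.C c * S.prod := by
  refine ⟨p.leadingCoeff, p.roots.map (fun r => l - MvPolynomial.C r), ?_, ?_, ?_⟩
  · rw [Multiset.card_map]
    exact (Polynomial.card_roots' p).trans hp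
  · intro q hq
    obtain ⟨r, -, rfl⟩ := Multiset.mem_map.1 hq
    refine (MvPolynomial.totalDegree_sub _ _).trans ?_
    simp [hl]
  · conv_lhs => rw [(IsAlgClosed.splits p).eq_prod_roots]
    rw [map_mul, aeval_C, map_multiset_prod, Multiset.map_map]
    simp [MvPolynomial.algebraMap_eq]

lemma interp_aux {F : Type*} [Field F] [CharZero F] (N a : ℕ) (ha : a ≤ N) :
    ∃ β : Fin (N + 1) → F, ∀ k : ℕ, k ≤ N →
      ∑ u, β u * ((u : ℕ) : F) ^ k = if k = a then 1 else 0 := by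
  set v : Fin (N + 1) → F := fun u => ((u : ℕ) : F)
  have hv : Function.Injective v := by
    intro i j h
    exact Fin.ext (Nat.cast_injective (R := F) h)
  have hdet : IsUnit (Matrix.vandermonde v).det :=
    isUnit_iff_ne_zero.2 (Matrix.det_vandermonde_ne_zero_iff.2 hv)
  refine ⟨fun u => (Matrix.vandermonde v)⁻¹ ⟨a, by omega⟩ u, fun k hk => ?_⟩
  have h := congrFun (congrFun (Matrix.nonsing_inv_mul _ hdet) ⟨a, by omega⟩) ⟨k, by omega⟩
  rw [Matrix.mul_apply] at h
  simp only [Matrix.vandermonde_apply, Matrix.one_apply, Fin.mk.injEq] at h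
  simpa [v, eq_comm] using h

open Polynomial in
lemma interp_poly {F R : Type*} [Field F] [CharZero F] [CommRing R] [Algebra F R]
    (N a : ℕ) (ha : a ≤ N) :
    ∃ β : Fin (N + 1) → F, ∀ P : R[X], P.natDegree ≤ N →
      P.coeff a = ∑ u, algebraMap F R (β u) * P.eval (algebraMap F R ((u : ℕ) : F)) := by
  obtain ⟨β, hβ⟩ := interp_aux (F := F) N a ha
  refine ⟨β, fun P hP => ?_⟩
  simp_rw [Polynomial.eval_eq_sum_range' (Nat.lt_succ_of_le hP), Finset.mul_sum]
  rw [Finset.sum_comm]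
  have : ∀ k ∈ Finset.range (N + 1), ∑ u : Fin (N + 1), algebraMap F R (β u) *
      (P.coeff k * algebraMap F R ((u : ℕ) : F) ^ k) =
      if k = a then P.coeff a else 0 := by
    intro k hk
    have h := congrArg (algebraMap F R) (hβ k (by simpa [Nat.lt_succ_iff] using hk))
    rw [map_sum] at h
    simp only [map_mul, map_pow] at h
    calc _ = P.coeff k * ∑ u : Fin (N + 1), algebraMap F R (β u) *
              algebraMap F R ((u : ℕ) : F) ^ k := by
            rw [Finset.mul_sum]; exact Finset.sum_congr rfl fun _ _ => by ring
      _ = _ := by rw [h]; split_ifs with hk <;> simp [hk]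
  rw [Finset.sum_congr rfl this]
  simp [Nat.lt_succ_of_le ha]

/-- Truncated exponential. -/
noncomputable def tExp (F : Type*) [Field F] (a : ℕ) : Polynomial F :=
  ∑ k ∈ Finset.range (a + 1), Polynomial.C ((k.factorial : F)⁻¹) * Polynomial.X ^ k

lemma tExp_natDegree (F : Type*) [Field F] (a : ℕ) : (tExp F a).natDegree ≤ a := by
  refine Polynomial.natDegree_sum_le_of_forall_le _ _ fun k hk => ?_
  refine (Polynomial.natDegree_C_mul_X_pow_le _ _).trans ?_
  simpa [Nat.lt_succ_iff] using hk

/-- The polynomial `E_a(y T)`. -/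
noncomputable def tE (F : Type*) {R : Type*} [Field F] [CommRing R] [Algebra F R] (a : ℕ) (y : R) :
    Polynomial R :=
  ∑ k ∈ Finset.range (a + 1),
    Polynomial.C (algebraMap F R ((k.factorial : F)⁻¹) * y ^ k) * Polynomial.X ^ k

lemma tE_natDegree (F : Type*) {R : Type*} [Field F] [CommRing R] [Algebra F R] (a : ℕ) (y : R) :
    (tE F a y).natDegree ≤ a := by
  refine Polynomial.natDegree_sum_le_of_forall_le _ _ fun k hk => ?_
  refine (Polynomial.natDegree_C_mul_X_pow_le _ _).trans ?_
  simpa [Nat.lt_succ_iff] using hk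

lemma tE_coeff (F : Type*) {R : Type*} [Field F] [CommRing R] [Algebra F R] (a : ℕ) (y : R)
    (k : ℕ) (hk : k ≤ a) :
    (tE F a y).coeff k = algebraMap F R ((k.factorial : F)⁻¹) * y ^ k := by
  simp only [tE, Polynomial.finsetSum_coeff, Polynomial.coeff_C_mul_X_pow]
  simp [Nat.lt_succ_of_le hk]

lemma tE_eval (F : Type*) {R : Type*} [Field F] [CommRing R] [Algebra F R] (a : ℕ) (y t : R) :
    (tE F a y).eval t = Polynomial.aeval (t * y) (tExp F a) := by
  simp only [tE, tExp, Polynomial.eval_finsetSum, map_sum, map_mul, map_pow, Polynomial.aeval_C,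
    Polynomial.aeval_X, Polynomial.eval_mul, Polynomial.eval_C, Polynomial.eval_pow,
    Polynomial.eval_X]
  exact Finset.sum_congr rfl fun _ _ => by ring

lemma dp_add (F : Type*) {R : Type*} [Field F] [CharZero F] [CommRing R] [Algebra F R] (x y : R)
    (k : ℕ) :
    algebraMap F R ((k.factorial : F)⁻¹) * (x + y) ^ k =
    ∑ p ∈ Finset.HasAntidiagonal.antidiagonal k, (algebraMap F R ((p.1.factorial : F)⁻¹) * x ^ p.1) *
      (algebraMap F R ((p.2.factorial : F)⁻¹) * y ^ p.2) := by
  rw [(Commute.all x y).add_pow', Finset.mul_sum]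
  refine Finset.sum_congr rfl fun p hp => ?_
  have hp : p.1 + p.2 = k := by simpa using hp
  have h : ((k.factorial : F)⁻¹) * (k.choose p.1 : F) =
      ((p.1.factorial : F)⁻¹) * ((p.2.factorial : F)⁻¹) := by
    have h1 : ((k.choose p.1 : F)) * p.1.factorial * p.2.factorial = k.factorial := by
      subst hp
      rw [Nat.choose_symm_add]
      exact_mod_cast Nat.add_choose_mul_factorial_mul_factorial p.1 p.2
    have a1 : (p.1.factorial : F) ≠ 0 := by exact_mod_cast p.1.factorial_ne_zero
    have a2 : (p.2.factorial : F) ≠ 0 := by exact_mod_cast p.2.factorial_ne_zero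
    have a3 : (k.factorial : F) ≠ 0 := by exact_mod_cast k.factorial_ne_zero
    field_simp
    linear_combination h1
  have h' := congrArg (algebraMap F R) h
  simp only [map_mul, map_natCast] at h'
  rw [nsmul_eq_mul]
  linear_combination (x ^ p.1 * y ^ p.2) * h'

lemma prod_coeff (F : Type*) {R ι : Type*} [Field F] [CharZero F] [CommRing R] [Algebra F R]
    (a : ℕ) (y : ι → R) (S : Finset ι) : ∀ k ≤ a,
    (∏ j ∈ S, tE F a (y j)).coeff k =
      algebraMap F R ((k.factorial : F)⁻¹) * (∑ j ∈ S, y j) ^ k := by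
  classical
  induction S using Finset.induction_on with
  | empty =>
    intro k hk
    rcases k with _ | k <;> simp [Polynomial.coeff_one]
  | insert j S hj ih =>
    intro k hk
    rw [Finset.prod_insert hj, Finset.sum_insert hj, dp_add, Polynomial.coeff_mul]
    refine Finset.sum_congr rfl fun p hp => ?_
    have hp : p.1 + p.2 = k := by simpa using hp
    rw [tE_coeff F a _ _ (by omega), ih _ (by omega)]

lemma duality_aux (F : Type*) {R : Type*} [Field F] [CharZero F] [CommRing R] [Algebra F R]
    (s a : ℕ) (hs : 1 ≤ s) (y : Fin s → R) :
    ∃ γ : Fin (s * a + 1) → F, (∑ j, y j) ^ a = ∑ u, algebraMap F R (γ u) *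
      ∏ j, Polynomial.aeval (algebraMap F R ((u : ℕ) : F) * y j) (tExp F a) := by
  obtain ⟨β, hβ⟩ := interp_poly (F := F) (R := R) (s * a) a (Nat.le_mul_of_pos_left a hs)
  refine ⟨fun u => (a.factorial : F) * β u, ?_⟩
  have h := hβ (∏ j, tE F a (y j)) (by
    refine (Polynomial.natDegree_prod_le _ _).trans ?_
    refine (Finset.sum_le_card_nsmul _ _ a fun j _ => tE_natDegree F a (y j)).trans ?_
    simp)
  rw [prod_coeff F a y _ a le_rfl] at h
  simp only [Polynomial.eval_prod, tE_eval] at h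
  have a3 : (a.factorial : F) ≠ 0 := by exact_mod_cast a.factorial_ne_zero
  have h1 : algebraMap F R (a.factorial : F) * algebraMap F R ((a.factorial : F)⁻¹) = 1 := by
    rw [← map_mul, mul_inv_cancel₀ a3, map_one]
  calc _ = algebraMap F R (a.factorial : F) *
        (algebraMap F R ((a.factorial : F)⁻¹) * (∑ j, y j) ^ a) := by
          rw [← mul_assoc, h1, one_mul]
    _ = _ := by
      rw [h, Finset.mul_sum]
      exact Finset.sum_congr rfl fun _ _ => by rw [map_mul, mul_assoc]

/-- Splitting a power of a sum of powers of linear forms into a depth-3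
expression: over an algebraically closed field of characteristic zero, for
polynomials `ℓ₁,…,ℓ_s` of degree at most 1, exponents `eᵢ ≥ 1` and `a ≥ 1`,
there exist, for `1 ≤ u ≤ sa+1`, constants `c_u ∈ F` and degree-≤1 polynomials
`L_{u,1},…,L_{u,d_u}` with `d_u ≤ a·(e₁+⋯+e_s)`, such that
`(ℓ₁^{e₁} + ⋯ + ℓ_s^{e_s})^a = Σ_{u=1}^{sa+1} c_u Π_{v=1}^{d_u} L_{u,v}`. -/
theorem power_sum_to_depth3 (F : Type*) [Field F] [IsAlgClosed F] [CharZero F]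
    (n s a : ℕ) (hs : 1 ≤ s) (ha : 1 ≤ a)
    (ℓ : Fin s → MvPolynomial (Fin n) F) (hdeg : ∀ i, (ℓ i).totalDegree ≤ 1)
    (e : Fin s → ℕ) (he : ∀ i, 1 ≤ e i) :
    ∃ (d : Fin (s * a + 1) → ℕ) (c : Fin (s * a + 1) → F)
      (L : (u : Fin (s * a + 1)) → Fin (d u) → MvPolynomial (Fin n) F),
      (∀ u, d u ≤ a * ∑ i, e i) ∧
      (∀ u v, (L u v).totalDegree ≤ 1) ∧
      (∑ i : Fin s, ℓ i ^ e i) ^ a =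
        ∑ u : Fin (s * a + 1), MvPolynomial.C (c u) * ∏ v : Fin (d u), L u v := by
  obtain ⟨γ, hγ⟩ := duality_aux F s a hs (fun j => ℓ j ^ e j)
  have key : ∀ (u : Fin (s * a + 1)) (j : Fin s),
      ∃ (c : F) (S : Multiset (MvPolynomial (Fin n) F)), S.card ≤ a * e j ∧
      (∀ q ∈ S, q.totalDegree ≤ 1) ∧
      Polynomial.aeval (algebraMap F (MvPolynomial (Fin n) F) ((u : ℕ) : F) * ℓ j ^ e j)
        (tExp F a) = MvPolynomial.C c * S.prod := by
    intro u j
    obtain ⟨c, S, h1, h2, h3⟩ := split_aux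
      ((tExp F a).comp (Polynomial.C ((u : ℕ) : F) * Polynomial.X ^ e j)) (a * e j)
      (Polynomial.natDegree_comp_le.trans (Nat.mul_le_mul (tExp_natDegree F a)
        (Polynomial.natDegree_C_mul_X_pow_le _ _))) (ℓ j) (hdeg j)
    refine ⟨c, S, h1, h2, ?_⟩
    rw [← h3, Polynomial.aeval_comp, map_mul, map_pow, Polynomial.aeval_C, Polynomial.aeval_X]
  choose c S h1 h2 h3 using key
  let T : Fin (s * a + 1) → List (MvPolynomial (Fin n) F) := fun u => (∑ j, S u j).toList
  refine ⟨fun u => (T u).length, fun u => γ u * ∏ j, c u j, fun u v => (T u).get v, ?_, ?_, ?_⟩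
  · intro u
    simp only [T, Multiset.length_toList, Finset.mul_sum]
    rw [Multiset.card_sum]
    exact Finset.sum_le_sum fun j _ => h1 u j
  · intro u v
    have hm : (T u).get v ∈ T u := List.get_mem _ _
    rw [Multiset.mem_toList, Multiset.mem_sum] at hm
    obtain ⟨j, -, hj⟩ := hm
    exact h2 u j _ hj
  · rw [hγ]
    refine Finset.sum_congr rfl fun u _ => ?_
    have hT : ∏ v : Fin (T u).length, (T u).get v = ∏ j, (S u j).prod := by
      rw [← List.prod_ofFn, List.ofFn_get, Multiset.prod_toList, Multiset.prod_sum]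
    rw [hT]
    rw [Finset.prod_congr rfl fun j _ => h3 u j]
    simp only [Finset.prod_mul_distrib, map_mul, map_prod, MvPolynomial.algebraMap_eq]
    ring
end
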